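/- arXiv:2407.09815 — 2 statements merged into one kernel-verified Lean document; each statement's English description precedes it below -/
import Mathlib

section
/- Let u ∈ C²([0,T]; ℓ²(ℤ^d)) satisfy the discrete linear wave equation ∂_t² u(x,t) − Δu(x,t) = 0 for all (x,t) ∈ ℤ^d × [0,T]. Then the energy E(t) := (1/2) Σ_{k∈ℤ^d} ( |∂_t u(k,t)|² + Σ_{j=1}^d |∂_j u(k,t)|² ) is conserved: E(t) = E(0) for all t ∈ [0,T]. -/
/-!
Up to the factor `i`, the numbers `-4/(π(4a²-1))` defining `φⱼ` are the Fourier coefficients of the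
function `σ(θ) = |exp(2πiθ) - 1|` on the circle. Hence `∂ⱼ = i σ(Sⱼ)` in the functional calculus of
the translation `Sⱼ` by `eⱼ`, a unitary operator on `ℓ²(ℤ^d)`, and `|σ|² = |exp(2πiθ) - 1|²` yields
`∂ⱼ* ∂ⱼ = (Sⱼ - 1)* (Sⱼ - 1) = 2 - Sⱼ - Sⱼ⁻¹`, that is, `Δ = -∑ⱼ ∂ⱼ* ∂ⱼ`.

The wave equation is therefore `∂ₜ U = V`, `∂ₜ V = -∑ⱼ Aⱼ* Aⱼ U` in a Hilbert space, with bounded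
operators `Aⱼ = ∂ⱼ`, and `∂ₜ (‖V‖² + ∑ⱼ ‖Aⱼ U‖²) = 2 Re (⟨V, ∂ₜ V⟩ + ∑ⱼ ⟨Aⱼ U, Aⱼ V⟩) = 0`.
-/

open scoped BigOperators ENNReal NNReal
open MeasureTheory Filter

noncomputable section

/-- Kernel `φⱼ` of the discrete partial derivative on `ℤ^d`:
`φⱼ(m) = -4i/(π(4a²-1))` if `m = a·eⱼ`, and `0` otherwise. -/
def phi (d : ℕ) (j : Fin d) (m : Fin d → ℤ) : ℂ :=
  if ∀ i, i ≠ j → m i = 0 then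
    (-4 * Complex.I) / ((Real.pi : ℂ) * (4 * (m j : ℂ) ^ 2 - 1))
  else 0

/-- Discrete convolution on `ℤ^d`. -/
def dconv {d : ℕ} (u v : (Fin d → ℤ) → ℂ) (k : Fin d → ℤ) : ℂ :=
  ∑' m, u m * v (k - m)

/-- Discrete partial derivative `∂ⱼ u = u ∗ φⱼ`. -/
def pd {d : ℕ} (j : Fin d) (u : (Fin d → ℤ) → ℂ) : (Fin d → ℤ) → ℂ :=
  dconv u (phi d j)

/-- Japanese bracket `⟨m⟩ = (1+|m|²)^{1/2}`. -/
def jap {d : ℕ} (m : Fin d → ℤ) : ℝ :=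
  Real.sqrt (1 + ∑ i, ((m i : ℝ)) ^ 2)

open scoped Classical in
/-- `ℓ^p` norm on `ℤ^d` (valued in `ℝ≥0∞`), `1 ≤ p ≤ ∞`. -/
def lpn {d : ℕ} (p : ℝ≥0∞) (f : (Fin d → ℤ) → ℂ) : ℝ≥0∞ :=
  if p = ⊤ then ⨆ m, (‖f m‖₊ : ℝ≥0∞)
  else (∑' m, (‖f m‖₊ : ℝ≥0∞) ^ p.toReal) ^ (1 / p.toReal)

/-- Weighted `ℓ^{2,k}` norm: the `ℓ²` norm of `m ↦ ⟨m⟩^k f(m)`. -/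
def w2 {d : ℕ} (k : ℕ) (f : (Fin d → ℤ) → ℂ) : ℝ≥0∞ :=
  lpn 2 (fun m => ((jap m ^ k : ℝ) : ℂ) * f m)

/-- Discrete Laplacian on `ℤ^d`. -/
def lap {d : ℕ} (u : (Fin d → ℤ) → ℂ) (x : Fin d → ℤ) : ℂ :=
  ∑ j, (u (x + Pi.single j 1) + u (x - Pi.single j 1) - 2 * u x)

/-- Continuity of a curve `t ↦ f(·,t)` into `ℓ^{2,k}(ℤ^d)` on a set `S` of times. -/
def ContW {d : ℕ} (k : ℕ) (S : Set ℝ) (f : ℝ → (Fin d → ℤ) → ℂ) : Prop :=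
  ∀ t ∈ S, Tendsto (fun s => w2 k (fun m => f s m - f t m))
    (nhdsWithin t S) (nhds (0 : ℝ≥0∞))

/-- `f'` is the derivative (in the `ℓ^{2,k}(ℤ^d)` norm) of the curve `t ↦ f(·,t)` on `S`. -/
def DerivW {d : ℕ} (k : ℕ) (S : Set ℝ) (f f' : ℝ → (Fin d → ℤ) → ℂ) : Prop :=
  ∀ t ∈ S, Tendsto
    (fun s => w2 k (fun m => (s - t)⁻¹ • (f s m - f t m) - f' t m))
    (nhdsWithin t (S \ {t})) (nhds (0 : ℝ≥0∞))

/-- `u ∈ C²(S; ℓ^{2,k}(ℤ^d))`, with first and second time derivatives `u1`, `u2`. -/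
structure IsC2 {d : ℕ} (k : ℕ) (S : Set ℝ) (u u1 u2 : ℝ → (Fin d → ℤ) → ℂ) : Prop where
  mem0 : ∀ t ∈ S, w2 k (u t) < ⊤
  mem1 : ∀ t ∈ S, w2 k (u1 t) < ⊤
  mem2 : ∀ t ∈ S, w2 k (u2 t) < ⊤
  cont0 : ContW k S u
  cont1 : ContW k S u1
  cont2 : ContW k S u2
  hder1 : DerivW k S u u1
  hder2 : DerivW k S u1 u2

/-! ### The symbol of the discrete derivative -/

/-- The function `θ ↦ |exp(2πiθ) - 1|` on the circle `ℝ/ℤ`: the Fourier symbol of `-i ∂ⱼ` in the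
variable dual to the `j`-th coordinate. -/
def diffSymbol : C(UnitAddCircle, ℂ) where
  toFun θ := ‖fourier 1 θ - 1‖
  continuous_toFun := by fun_prop

lemma star_diffSymbol_mul_self :
    star diffSymbol * diffSymbol = star (fourier 1 - 1) * (fourier 1 - 1) := by
  ext θ
  simpa [diffSymbol, sq] using (Complex.conj_mul' (fourier 1 θ - 1)).symm

lemma diffSymbol_coe {x : ℝ} (hx : x ∈ Set.Icc (0 : ℝ) 1) :
    diffSymbol x =
      Complex.I * (Complex.exp (-(Real.pi * Complex.I * x)) -
        Complex.exp (Real.pi * Complex.I * x)) := by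
  have hsin : 0 ≤ Real.sin (Real.pi * x) :=
    Real.sin_nonneg_of_nonneg_of_le_pi (mul_nonneg Real.pi_pos.le hx.1)
      (mul_le_of_le_one_right Real.pi_pos.le hx.2)
  have hexp : fourier 1 (x : UnitAddCircle) = Complex.exp (Complex.I * (2 * Real.pi * x : ℝ)) := by
    rw [fourier_coe_apply]; push_cast; ring_nf
  change ((‖fourier 1 (x : UnitAddCircle) - 1‖ : ℝ) : ℂ) = _
  rw [hexp, Complex.norm_exp_I_mul_ofReal_sub_one, mul_assoc, mul_div_cancel_left₀ _ two_ne_zero,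
    Real.norm_of_nonneg (by positivity)]
  push_cast
  rw [Complex.two_sin]
  ring_nf

lemma integral_exp_odd_mul_pi_mul_I {n : ℤ} (hn : Odd n) :
    ∫ x in (0 : ℝ)..1, Complex.exp (n * (Real.pi * Complex.I) * x) =
      -2 / (n * (Real.pi * Complex.I)) := by
  have hn0 : n * (Real.pi * Complex.I) ≠ 0 := by
    have : n ≠ 0 := by rintro rfl; simp at hn
    simp [this, Real.pi_ne_zero]
  rw [integral_exp_mul_complex hn0]
  simp only [Complex.ofReal_one, mul_one, Complex.ofReal_zero, mul_zero, Complex.exp_zero,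
    Complex.exp_int_mul, Complex.exp_pi_mul_I, hn.neg_one_zpow]
  norm_num

lemma fourierCoeff_diffSymbol (a : ℤ) :
    fourierCoeff diffSymbol a = -4 / (Real.pi * (4 * (a : ℂ) ^ 2 - 1)) := by
  have heqOn : Set.EqOn (fun x : ℝ => fourier (-a) (x : UnitAddCircle) • diffSymbol x)
      (fun x : ℝ => Complex.I * (Complex.exp ((-(2 * a + 1) : ℤ) * (Real.pi * Complex.I) * x)
        - Complex.exp ((-(2 * a - 1) : ℤ) * (Real.pi * Complex.I) * x))) (Set.uIcc 0 1) := by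
    intro x hx
    rw [Set.uIcc_of_le zero_le_one] at hx
    simp only [diffSymbol_coe hx, fourier_coe_apply, smul_eq_mul]
    rw [mul_left_comm, mul_sub, ← Complex.exp_add, ← Complex.exp_add]
    push_cast
    ring_nf
  rw [fourierCoeff_eq_intervalIntegral _ _ 0, zero_add, intervalIntegral.integral_congr heqOn,
    intervalIntegral.integral_const_mul, intervalIntegral.integral_sub,
    integral_exp_odd_mul_pi_mul_I, integral_exp_odd_mul_pi_mul_I]
  · have h1 : (2 * a + 1 : ℂ) ≠ 0 := by exact_mod_cast (by omega : 2 * a + 1 ≠ 0)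
    have h2 : (2 * a - 1 : ℂ) ≠ 0 := by exact_mod_cast (by omega : 2 * a - 1 ≠ 0)
    have hpi := Complex.ofReal_ne_zero.2 Real.pi_ne_zero
    rw [show (4 * (a : ℂ) ^ 2 - 1) = (2 * a + 1) * (2 * a - 1) by ring, div_one, one_smul]
    push_cast
    field_simp
    ring
  · exact Odd.neg ⟨a - 1, by ring⟩
  · exact Odd.neg ⟨a, by ring⟩
  · exact Continuous.intervalIntegrable (by fun_prop) _ _
  · exact Continuous.intervalIntegrable (by fun_prop) _ _

lemma summable_fourierCoeff_diffSymbol : Summable (fourierCoeff diffSymbol) := by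
  have hsq : Summable fun a : ℤ => 2 * (1 / (a : ℝ) ^ 2) :=
    (Real.summable_one_div_int_pow.2 one_lt_two).mul_left 2
  refine hsq.of_norm_bounded_eventually ?_
  filter_upwards [(Set.finite_singleton (0 : ℤ)).compl_mem_cofinite] with a ha
  have ha1 : (1 : ℝ) ≤ (a : ℝ) ^ 2 := by
    exact_mod_cast Int.one_le_abs (pow_ne_zero 2 ha) |>.trans_eq (abs_of_nonneg (sq_nonneg a))
  have hpi := Real.pi_gt_three
  calc
    ‖fourierCoeff diffSymbol a‖ = ‖-4 / (Real.pi * (4 * (a : ℝ) ^ 2 - 1))‖ := by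
      rw [fourierCoeff_diffSymbol, ← Complex.norm_real]
      push_cast
      rfl
    _ = 4 / (Real.pi * (4 * (a : ℝ) ^ 2 - 1)) := by
      rw [norm_div, norm_neg, Real.norm_ofNat, Real.norm_of_nonneg]
      exact mul_nonneg Real.pi_pos.le (by linarith)
    _ ≤ 4 / (1 * (2 * (a : ℝ) ^ 2)) := by
      gcongr <;> linarith
    _ = 2 * (1 / (a : ℝ) ^ 2) := by ring

/-! ### Functional calculus of a unitary element -/

section UnitaryCalculus

variable {A : Type*} [CStarAlgebra A]

/-- The inclusion of the spectrum of a unitary element into the unit circle, parametrised by `ℝ/ℤ`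
because Fourier coefficients are defined for functions on `AddCircle`. -/
def spectrumToAddCircle (U : unitary A) : C(spectrum ℂ (U : A), UnitAddCircle) where
  toFun z := (AddCircle.homeomorphCircle one_ne_zero).symm
    ⟨z, mem_sphere_zero_iff_norm.2 (spectrum.norm_eq_one_of_unitary U.2 z.2)⟩
  continuous_toFun := (Homeomorph.continuous _).comp (by fun_prop)

/-- The continuous functional calculus of a unitary element for functions on the whole circle `ℝ/ℤ`;
a function `f` is evaluated at `θ` where the spectral variable is `exp(2πiθ)`. -/
def circleCalculus (U : unitary A) : C(UnitAddCircle, ℂ) →⋆ₐ[ℂ] A :=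
  (cfcHom (R := ℂ) (Unitary.coe_isStarNormal U)).comp
    (ContinuousMap.compStarAlgHom' ℂ ℂ (spectrumToAddCircle U))

lemma circleCalculus_fourier_one (U : unitary A) : circleCalculus U (fourier 1) = U := by
  have h : (fourier 1 : C(UnitAddCircle, ℂ)).comp (spectrumToAddCircle U) =
      (ContinuousMap.id ℂ).restrict (spectrum ℂ (U : A)) := by
    ext z
    rw [ContinuousMap.comp_apply, fourier_one, spectrumToAddCircle, ContinuousMap.coe_mk,
      ← AddCircle.homeomorphCircle_apply one_ne_zero]
    exact congrArg Subtype.val (Homeomorph.apply_symm_apply _ _)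
  calc
    circleCalculus U (fourier 1) = cfcHom (R := ℂ) (Unitary.coe_isStarNormal U)
        ((ContinuousMap.id ℂ).restrict (spectrum ℂ (U : A))) := congrArg _ h
    _ = U := cfcHom_id _

lemma circleCalculus_fourier (U : unitary A) (n : ℤ) :
    circleCalculus U (fourier n) = (U ^ n : unitary A) := by
  let fourierHom : Multiplicative ℤ →* C(UnitAddCircle, ℂ) :=
    { toFun := fun k => fourier k.toAdd
      map_one' := by ext; simp
      map_mul' := fun _ _ => by ext; simp }
  have h : (circleCalculus U : _ →* A).comp fourierHom =
      (unitary A).subtype.comp (zpowersHom _ U) := by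
    apply MonoidHom.ext_mint
    simp [fourierHom, circleCalculus_fourier_one]
  exact DFunLike.congr_fun h (Multiplicative.ofAdd n)

open scoped CStarAlgebra in
lemma hasSum_circleCalculus (U : unitary A) {f : C(UnitAddCircle, ℂ)}
    (hf : Summable (fourierCoeff f)) :
    HasSum (fun n => fourierCoeff f n • ((U ^ n : unitary A) : A)) (circleCalculus U f) := by
  have h := (hasSum_fourier_series_of_summable hf).map (circleCalculus U) (map_continuous _)
  simpa only [Function.comp_def, map_smul, circleCalculus_fourier] using h

end UnitaryCalculus

/-! ### Translations of `ℓ²` -/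

lemma hasSum_norm_sq_lp {ι : Type*} {E : ι → Type*} [∀ i, NormedAddCommGroup (E i)]
    (F : lp E 2) : HasSum (fun i => ‖F i‖ ^ 2) (‖F‖ ^ 2) := by
  simpa using lp.hasSum_norm (p := 2) (by norm_num) F

lemma tsum_nnnorm_sq_lp {ι : Type*} {E : ι → Type*} [∀ i, NormedAddCommGroup (E i)]
    (F : lp E 2) :
    ∑' i, (‖F i‖₊ : ℝ≥0∞) ^ 2 = ENNReal.ofReal (‖F‖ ^ 2) := by
  rw [← (hasSum_norm_sq_lp F).tsum_eq,
    ENNReal.ofReal_tsum_of_nonneg (fun _ => sq_nonneg _) (hasSum_norm_sq_lp F).summable]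
  refine tsum_congr fun i => ?_
  rw [ENNReal.ofReal_pow (norm_nonneg _), ofReal_norm, enorm_eq_nnnorm]

lemma memℓp_comp_of_injective {ι κ E : Type*} [NormedAddCommGroup E] {p : ℝ≥0∞} {g : κ → ι}
    (hg : g.Injective) {f : ι → E} (hf : Memℓp f p) : Memℓp (f ∘ g) p := by
  rcases p.trichotomy with rfl | rfl | hp
  · rw [memℓp_zero_iff] at hf ⊢
    exact hf.preimage hg.injOn
  · rw [memℓp_infty_iff] at hf ⊢
    exact hf.mono (Set.range_comp_subset_range g fun i => ‖f i‖)
  · rw [memℓp_gen_iff hp] at hf ⊢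
    exact hf.comp_injective hg

/-- The Hilbert space `ℓ²(ι)` of square summable functions `ι → ℂ`. -/
abbrev EllTwo (ι : Type*) := lp (fun _ : ι => ℂ) 2

/-- The C*-algebra of bounded operators on `ℓ²(ι)`. -/
abbrev EllTwoOp (ι : Type*) := EllTwo ι →L[ℂ] EllTwo ι

section Translation

variable {G : Type*} [AddCommGroup G]

/-- Translation by `g` on `ℓ²(G)`, `(translationIsometry g F)(m) = F(m - g)`. -/
def translationIsometry (g : G) : EllTwo G ≃ₗᵢ[ℂ] EllTwo G where
  toFun F :=
    ⟨fun m => F (m - g), memℓp_comp_of_injective (sub_left_injective (b := g)) (lp.memℓp F)⟩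
  invFun F := ⟨fun m => F (m + g), memℓp_comp_of_injective (add_left_injective g) (lp.memℓp F)⟩
  map_add' _ _ := rfl
  map_smul' _ _ := rfl
  left_inv F := by ext m; simp
  right_inv F := by ext m; simp
  norm_map' F := by
    rw [← sq_eq_sq₀ (norm_nonneg _) (norm_nonneg _)]
    exact (hasSum_norm_sq_lp _).unique
      ((Equiv.subRight g).hasSum_iff.2 (hasSum_norm_sq_lp F))

/-- The regular representation of `G` on `ℓ²(G)`. -/
def translation : Multiplicative G →* unitary (EllTwoOp G) :=
  Unitary.linearIsometryEquiv.symm.toMonoidHom.comp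
    { toFun := fun g => translationIsometry g.toAdd
      map_one' := by ext F m; simp [translationIsometry]
      map_mul' := fun g h => by ext F m; exact congrArg F (sub_sub m g.toAdd h.toAdd).symm }

lemma translation_apply (g : Multiplicative G) (F : EllTwo G) (m : G) :
    (translation g : EllTwoOp G) F m = F (m - g.toAdd) := rfl

end Translation

/-! ### The operators `∂ⱼ` on `ℓ²(ℤ^d)` -/

section PartialDerivative

variable {d : ℕ}

lemma phi_single (j : Fin d) (a : ℤ) :
    phi d j (Pi.single j a) = Complex.I * fourierCoeff diffSymbol a := by
  rw [phi, if_pos fun i hi => Pi.single_eq_of_ne (M := fun _ => ℤ) hi a, Pi.single_eq_same,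
    fourierCoeff_diffSymbol]
  ring

lemma support_phi_subset (j : Fin d) :
    Function.support (phi d j) ⊆ Set.range fun a : ℤ => (Pi.single j a : Fin d → ℤ) := by
  intro m hm
  have h : ∀ i, i ≠ j → m i = 0 := by
    by_contra h
    exact hm (if_neg h)
  refine ⟨m j, funext fun i => ?_⟩
  rcases eq_or_ne i j with rfl | hi
  · simp
  · simp [hi, h i hi]

lemma pd_eq_tsum (j : Fin d) (f : (Fin d → ℤ) → ℂ) (k : Fin d → ℤ) :
    pd j f k =
      ∑' a : ℤ, Complex.I * (fourierCoeff diffSymbol a * f (k - Pi.single j a)) := by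
  have hsupp : (Function.support fun m => f (k - m) * phi d j m) ⊆
      Set.range fun a : ℤ => (Pi.single j a : Fin d → ℤ) :=
    (Function.support_mul_subset_right _ _).trans (support_phi_subset j)
  calc
    pd j f k = ∑' m, f (k - m) * phi d j m := by
      rw [pd, dconv, ← (Equiv.subLeft k).tsum_eq]
      simp only [Equiv.subLeft_apply, sub_sub_cancel]
    _ = ∑' a : ℤ, f (k - Pi.single j a) * phi d j (Pi.single j a) :=
      ((Pi.single_injective (M := fun _ => ℤ) j).tsum_eq hsupp).symm
    _ = _ := tsum_congr fun a => by rw [phi_single]; ring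

/-- The unitary translation `Sⱼ` by `eⱼ` on `ℓ²(ℤ^d)`. -/
def unitShift (j : Fin d) : unitary (EllTwoOp (Fin d → ℤ)) :=
  translation (Multiplicative.ofAdd (Pi.single j 1))

lemma unitShift_zpow_apply (j : Fin d) (a : ℤ) (F : EllTwo (Fin d → ℤ)) (m : Fin d → ℤ) :
    ((unitShift j ^ a : unitary _) : EllTwoOp (Fin d → ℤ)) F m = F (m - Pi.single j a) := by
  rw [unitShift, ← map_zpow, ← ofAdd_zsmul, translation_apply, toAdd_ofAdd, ← Pi.single_smul,
    smul_eq_mul, mul_one]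

/-- The discrete partial derivative `∂ⱼ` as a bounded operator on `ℓ²(ℤ^d)`, defined through its
symbol; `coe_partialOp` identifies it with the convolution `pd j`. -/
def partialOp (j : Fin d) : EllTwoOp (Fin d → ℤ) :=
  Complex.I • circleCalculus (unitShift j) diffSymbol

lemma coe_partialOp (j : Fin d) (F : EllTwo (Fin d → ℤ)) : ⇑(partialOp j F) = pd j F := by
  funext m
  have h := ((hasSum_circleCalculus (unitShift j) summable_fourierCoeff_diffSymbol).const_smul
    Complex.I).mapL ((lp.evalCLM ℂ (fun _ => ℂ) 2 m).comp (ContinuousLinearMap.apply ℂ _ F))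
  rw [pd_eq_tsum]
  have heval : ∀ G : EllTwo (Fin d → ℤ), lp.evalCLM ℂ (fun _ => ℂ) 2 m G = G m := fun _ => rfl
  simpa [heval, unitShift_zpow_apply, partialOp] using h.tsum_eq.symm

lemma star_partialOp_mul_self (j : Fin d) :
    star (partialOp j) * partialOp j =
      1 - (unitShift j : EllTwoOp (Fin d → ℤ)) + (1 - ((unitShift j)⁻¹ : unitary _)) := by
  have hS : star (unitShift j : EllTwoOp (Fin d → ℤ)) * unitShift j = 1 :=
    Unitary.coe_star_mul_self _
  calc
    star (partialOp j) * partialOp j =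
        circleCalculus (unitShift j) (star diffSymbol * diffSymbol) := by
      simp [partialOp, smul_smul, map_mul, map_star]
    _ = star (unitShift j - 1 : EllTwoOp (Fin d → ℤ)) * (unitShift j - 1) := by
      rw [star_diffSymbol_mul_self, map_mul, map_star, map_sub, map_one, circleCalculus_fourier_one]
    _ = _ := by
      rw [star_sub, star_one, sub_mul, mul_sub, mul_sub, hS, ← Unitary.star_eq_inv,
        Unitary.coe_star]
      noncomm_ring

lemma coe_neg_sum_adjoint_partialOp (F : EllTwo (Fin d → ℤ)) :
    ⇑(-∑ j, (partialOp j).adjoint (partialOp j F)) = lap F := by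
  funext m
  have hj : ∀ j, (partialOp j).adjoint (partialOp j F) m =
      F m - F (m - Pi.single j 1) + (F m - F (m + Pi.single j 1)) := by
    intro j
    have hneg := unitShift_zpow_apply j (-1) F m
    have hpos := unitShift_zpow_apply j 1 F m
    rw [zpow_neg_one, Pi.single_neg, sub_neg_eq_add] at hneg
    rw [zpow_one] at hpos
    rw [← hneg, ← hpos]
    exact congrArg (fun A : EllTwoOp (Fin d → ℤ) => A F m) (star_partialOp_mul_self j)
  rw [lp.coeFn_neg, lp.coeFn_sum, Pi.neg_apply, Finset.sum_apply, lap, ← Finset.sum_neg_distrib]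
  exact Finset.sum_congr rfl fun j _ => by rw [hj]; ring

end PartialDerivative

/-! ### Conservation of energy -/

lemma sq_norm_add_sum_sq_norm_eq_of_hasDerivWithinAt {𝕜 H K ι : Type*} [RCLike 𝕜]
    [NormedAddCommGroup H] [InnerProductSpace 𝕜 H] [CompleteSpace H] [NormedSpace ℝ H]
    [IsScalarTower ℝ 𝕜 H]
    [NormedAddCommGroup K] [InnerProductSpace 𝕜 K] [CompleteSpace K] [NormedSpace ℝ K]
    [IsScalarTower ℝ 𝕜 K] [Fintype ι]
    (A : ι → H →L[𝕜] K) {S : Set ℝ} (hS : Convex ℝ S) {U V : ℝ → H}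
    (hU : ∀ t ∈ S, HasDerivWithinAt U (V t) S t)
    (hV : ∀ t ∈ S, HasDerivWithinAt V (-∑ j, (A j).adjoint (A j (U t))) S t)
    {s t : ℝ} (hs : s ∈ S) (ht : t ∈ S) :
    ‖V t‖ ^ 2 + ∑ j, ‖A j (U t)‖ ^ 2 = ‖V s‖ ^ 2 + ∑ j, ‖A j (U s)‖ ^ 2 := by
  set E : ℝ → 𝕜 := fun r => inner 𝕜 (V r) (V r) + ∑ j, inner 𝕜 (A j (U r)) (A j (U r)) with hE
  have hE' : ∀ r ∈ S, HasDerivWithinAt E 0 S r := by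
    intro r hr
    have hAU : ∀ j, HasDerivWithinAt (fun r => A j (U r)) (A j (V r)) S r := fun j =>
      ((A j).restrictScalars ℝ).hasFDerivAt.comp_hasDerivWithinAt r (hU r hr)
    convert! ((hV r hr).inner 𝕜 (hV r hr)).add
      (HasDerivWithinAt.fun_sum (u := Finset.univ) fun j _ => (hAU j).inner 𝕜 (hAU j)) using 1
    simp only [inner_neg_left, inner_neg_right, inner_sum, sum_inner,
      ContinuousLinearMap.adjoint_inner_left, ContinuousLinearMap.adjoint_inner_right,
      Finset.sum_add_distrib]
    ring
  have hconst : E t = E s := by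
    simpa [sub_eq_zero] using
      hS.norm_image_sub_le_of_norm_hasDerivWithin_le hE' (fun _ _ => norm_zero.le) hs ht
  simp only [hE, inner_self_eq_norm_sq_to_K] at hconst
  exact_mod_cast hconst

section Energy

variable {d : ℕ}

lemma w2_zero (f : (Fin d → ℤ) → ℂ) :
    w2 0 f = (∑' m, (‖f m‖₊ : ℝ≥0∞) ^ 2) ^ (1 / 2 : ℝ) := by
  simp [w2, lpn]

lemma w2_zero_coe (F : EllTwo (Fin d → ℤ)) : w2 0 F = ‖F‖ₑ := by
  rw [w2_zero, tsum_nnnorm_sq_lp, ENNReal.ofReal_pow (norm_nonneg _), ofReal_norm,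
    ← ENNReal.rpow_natCast_mul]
  norm_num

lemma memℓp_two_of_w2_lt_top {f : (Fin d → ℤ) → ℂ} (h : w2 0 f < ⊤) : Memℓp f 2 := by
  rw [w2_zero, ENNReal.rpow_lt_top_iff_of_pos (by norm_num)] at h
  have hsum : ∑' m, ((‖f m‖₊ ^ 2 : ℝ≥0) : ℝ≥0∞) ≠ ⊤ := by exact_mod_cast h.ne
  rw [memℓp_gen_iff (by norm_num)]
  simpa using NNReal.summable_coe.2 (ENNReal.tsum_coe_ne_top_iff_summable.1 hsum)

lemma exists_coe_eq_of_w2_lt_top {f : ℝ → (Fin d → ℤ) → ℂ} {S : Set ℝ}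
    (hf : ∀ t ∈ S, w2 0 (f t) < ⊤) :
    ∃ F : ℝ → EllTwo (Fin d → ℤ), ∀ t ∈ S, ⇑(F t) = f t := by
  have h : ∀ t, ∃ F : EllTwo (Fin d → ℤ), t ∈ S → ⇑F = f t := fun t => by
    by_cases ht : t ∈ S
    · exact ⟨⟨f t, memℓp_two_of_w2_lt_top (hf t ht)⟩, fun _ => rfl⟩
    · exact ⟨0, fun h => absurd h ht⟩
  choose F hF using h
  exact ⟨F, hF⟩

lemma hasDerivWithinAt_of_derivW {S : Set ℝ} {f f' : ℝ → (Fin d → ℤ) → ℂ}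
    (h : DerivW 0 S f f') {F : ℝ → EllTwo (Fin d → ℤ)} (hF : ∀ t ∈ S, ⇑(F t) = f t)
    {t : ℝ} (ht : t ∈ S) {F' : EllTwo (Fin d → ℤ)} (hF' : ⇑F' = f' t) :
    HasDerivWithinAt F F' S t := by
  rw [hasDerivWithinAt_iff_tendsto_slope, tendsto_iff_edist_tendsto_0]
  refine (h t ht).congr' ?_
  filter_upwards [self_mem_nhdsWithin] with s hs
  rw [edist_eq_enorm_sub, ← w2_zero_coe, slope_def_module, lp.coeFn_sub, lp.coeFn_smul,
    lp.coeFn_sub, hF s hs.1, hF t ht, hF']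
  rfl

/-- The energy `(‖v‖² + ∑ⱼ ‖∂ⱼ f‖²)/2` of the state with displacement `f` and velocity `v`. -/
def waveEnergy (f v : (Fin d → ℤ) → ℂ) : ℝ≥0∞ :=
  (1 / 2 : ℝ≥0∞) * ∑' m, ((‖v m‖₊ : ℝ≥0∞) ^ 2 + ∑ j, (‖pd j f m‖₊ : ℝ≥0∞) ^ 2)

lemma waveEnergy_coe (F V : EllTwo (Fin d → ℤ)) :
    waveEnergy F V =
      (1 / 2) * ENNReal.ofReal (‖V‖ ^ 2 + ∑ j, ‖partialOp j F‖ ^ 2) := by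
  rw [waveEnergy, ENNReal.tsum_add, Summable.tsum_finsetSum fun _ _ => ENNReal.summable,
    ENNReal.ofReal_add (sq_nonneg _) (Finset.sum_nonneg fun _ _ => sq_nonneg _),
    ENNReal.ofReal_sum_of_nonneg fun _ _ => sq_nonneg _]
  simp only [← coe_partialOp, tsum_nnnorm_sq_lp]

theorem stmt7_general {S : Set ℝ} (hS : Convex ℝ S) {u u1 u2 : ℝ → (Fin d → ℤ) → ℂ}
    (hmem0 : ∀ t ∈ S, w2 0 (u t) < ⊤) (hmem1 : ∀ t ∈ S, w2 0 (u1 t) < ⊤)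
    (hder1 : DerivW 0 S u u1) (hder2 : DerivW 0 S u1 u2)
    (heq : ∀ t ∈ S, ∀ x, u2 t x - lap (u t) x = 0) {s t : ℝ} (hs : s ∈ S) (ht : t ∈ S) :
    waveEnergy (u t) (u1 t) = waveEnergy (u s) (u1 s) := by
  obtain ⟨U, hU⟩ := exists_coe_eq_of_w2_lt_top hmem0
  obtain ⟨V, hV⟩ := exists_coe_eq_of_w2_lt_top hmem1
  have hU' : ∀ r ∈ S, HasDerivWithinAt U (V r) S r := fun r hr =>
    hasDerivWithinAt_of_derivW hder1 hU hr (hV r hr)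
  have hV' : ∀ r ∈ S,
      HasDerivWithinAt V (-∑ j, (partialOp j).adjoint (partialOp j (U r))) S r := by
    refine fun r hr => hasDerivWithinAt_of_derivW hder2 hV hr ?_
    rw [coe_neg_sum_adjoint_partialOp, hU r hr]
    exact funext fun x => (sub_eq_zero.1 (heq r hr x)).symm
  rw [← hU s hs, ← hU t ht, ← hV s hs, ← hV t ht, waveEnergy_coe, waveEnergy_coe,
    sq_norm_add_sum_sq_norm_eq_of_hasDerivWithinAt partialOp hS hU' hV' hs ht]

end Energy

/-- energy conservation for the discrete linear wave equation:
`E(t) = (1/2)Σ_k(|∂ₜu(k,t)|² + Σⱼ|∂ⱼu(k,t)|²)` is constant on `[0,T]`. -/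
theorem stmt7 (d : ℕ) (hd : 0 < d) (T : ℝ) (hT : 0 < T)
    (u u1 u2 : ℝ → (Fin d → ℤ) → ℂ)
    (hu : IsC2 0 (Set.Icc 0 T) u u1 u2)
    (heq : ∀ t ∈ Set.Icc (0 : ℝ) T, ∀ x, u2 t x - lap (u t) x = 0) :
    ∀ t ∈ Set.Icc (0 : ℝ) T,
      (1 / 2 : ℝ≥0∞) *
          ∑' m, ((‖u1 t m‖₊ : ℝ≥0∞) ^ 2 + ∑ j, (‖pd j (u t) m‖₊ : ℝ≥0∞) ^ 2) =
        (1 / 2 : ℝ≥0∞) *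
          ∑' m, ((‖u1 0 m‖₊ : ℝ≥0∞) ^ 2 + ∑ j, (‖pd j (u 0) m‖₊ : ℝ≥0∞) ^ 2) :=
  fun _ ht => stmt7_general (convex_Icc 0 T) hu.mem0 hu.mem1 hu.hder1 hu.hder2 heq
    ⟨le_rfl, hT.le⟩ ht
end
end

section
/- Let k ∈ {0,1}. Let u ∈ C²([0,T]; ℓ²(ℤ^d)) solve the inhomogeneous linear wave equation ∂_t² u − Δu = F on ℤ^d × [0,T] with u(·,0) = f and ∂_t u(·,0) = g, where f, g ∈ ℓ^{2,k}(ℤ^d) and F ∈ L¹([0,T]; ℓ^{2,k}(ℤ^d)). Then there is a constant C (depending only on d and k) such that for all t ∈ [0,T]: ‖u(·,t)‖_{ℓ^{2,k}} + ‖∂_t u(·,t)‖_{ℓ^{2,k}} ≤ C(1+|t|^{k+1})[ ‖f‖_{ℓ^{2,k}} + ‖g‖_{ℓ^{2,k}} + ∫_0^t ‖F(·,s)‖_{ℓ^{2,k}} ds ]. -/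
/-!
Write the equation as `V'' = -∇†∇V + F` in the real Hilbert space `ℓ²(ℤ^d)`. For `X = (V', ∇V)` the
two terms of `⟨X, X'⟩` containing `∇` cancel, so `⟨X, X'⟩ = ⟨V', F⟩ ≤ ‖X‖ ‖F‖` and `‖X‖` grows at
most by `∫ ‖F‖`. Hence `∂ₜu` and `∇u` are bounded without growth in `t`, and `u` with one factor
`1 + t`; this is the case `k = 0`.

For `k = 1` the same estimate is applied to `wu` with `w(x) = sin(ε xⱼ) / ε`. Unlike `xⱼ`, this
weight is bounded, so that `wu` is a `C²` curve in `ℓ²`. It solves the wave equation with source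
`wF - [Δ, w]u`, and the commutator only involves `∇u` and `(Δw)u`. Since `w` is `1`-Lipschitz and
`|Δw| ≤ ε`, its norm is at most `2 ‖∇u‖ + ε ‖u‖`, which is bounded by the data uniformly in time
once `ε (1 + t) ≤ 1`. So `w ∂ₜu` grows like `1 + t` and `wu` like `(1 + t)²`, uniformly in `ε`.
Letting `ε → 0` gives the bounds with weight `xⱼ`, and `⟨x⟩² = 1 + ∑ⱼ xⱼ²`.
-/

open scoped BigOperators ENNReal NNReal
open MeasureTheory Filter

noncomputable section

open Set Topology
open scoped InnerProduct

section Fencing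

variable {H : Type*} [NormedAddCommGroup H] [InnerProductSpace ℝ H] {a b t : ℝ} {X X' : ℝ → H}

lemma norm_le_of_inner_deriv_right_le_mul_deriv {β φ : ℝ → ℝ} (hX : ContinuousOn X (Icc a b))
    (hX' : ∀ s ∈ Ico a b, HasDerivWithinAt X (X' s) (Ici s) s) (hβ : ContinuousOn β (Icc a b))
    (hβ' : ∀ s ∈ Ico a b, HasDerivWithinAt β (φ s) (Ici s) s) (hβ0 : ∀ s ∈ Icc a b, 0 ≤ β s)
    (ha : ‖X a‖ ≤ β a) (hle : ∀ s ∈ Ico a b, inner ℝ (X s) (X' s) ≤ ‖X s‖ * φ s)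
    (ht : t ∈ Icc a b) : ‖X t‖ ≤ β t := by
  have fence : ∀ δ > 0, ‖X t‖ ^ 2 ≤ (β t + δ * (1 + (t - a))) ^ 2 := by
    intro δ hδ
    refine image_le_of_deriv_right_lt_deriv_boundary'
      (B := fun s => (β s + δ * (1 + (s - a))) ^ 2)
      (B' := fun s => 2 * (β s + δ * (1 + (s - a))) * (φ s + δ)) (hX.norm.pow 2)
      (fun s hs => (hX' s hs).norm_sq) (pow_le_pow_left₀ (norm_nonneg _) (ha.trans ?_) 2)
      (by fun_prop) (fun s hs => ?_) (fun s hs hcontact => ?_) ht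
    · simpa using hδ.le
    · have hline : HasDerivWithinAt (fun s => δ * (1 + (s - a))) δ (Ici s) s := by
        simpa using ((((hasDerivWithinAt_id s (Ici s)).sub_const a).const_add 1).const_mul δ)
      simpa using ((hβ' s hs).fun_add hline).fun_pow 2
    · have hpos : 0 < β s + δ * (1 + (s - a)) :=
        add_pos_of_nonneg_of_pos (hβ0 s (Ico_subset_Icc_self hs))
          (mul_pos hδ (by linarith [hs.1]))
      have hnorm : ‖X s‖ = β s + δ * (1 + (s - a)) :=
        (sq_eq_sq₀ (norm_nonneg _) hpos.le).1 hcontact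
      calc 2 * inner ℝ (X s) (X' s) ≤ 2 * (‖X s‖ * φ s) := by gcongr; exact hle s hs
        _ < 2 * (β s + δ * (1 + (s - a))) * (φ s + δ) := by
          rw [hnorm]; nlinarith [mul_pos hpos hδ]
  have hlim : Tendsto (fun δ => (β t + δ * (1 + (t - a))) ^ 2) (𝓝[>] 0) (𝓝 (β t ^ 2)) := by
    have : Continuous fun δ => (β t + δ * (1 + (t - a))) ^ 2 := by fun_prop
    simpa using (this.tendsto 0).mono_left nhdsWithin_le_nhds
  exact (sq_le_sq₀ (norm_nonneg _) (hβ0 t ht)).1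
    (ge_of_tendsto hlim (eventually_nhdsWithin_of_forall fence))

lemma hasDerivWithinAt_integral_Icc {φ : ℝ → ℝ} (hφ : ContinuousOn φ (Icc a b))
    (ht : t ∈ Icc a b) : HasDerivWithinAt (fun s => ∫ r in a..s, φ r) (φ t) (Icc a b) t := by
  have : Fact (t ∈ Icc a b) := ⟨ht⟩
  refine intervalIntegral.integral_hasDerivWithinAt_right ?_
    (hφ.stronglyMeasurableAtFilter_nhdsWithin measurableSet_Icc t) (hφ t ht)
  exact (hφ.mono (by rw [uIcc_of_le ht.1]; exact Icc_subset_Icc_right ht.2)).intervalIntegrable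

lemma norm_le_add_integral_of_inner_deriv_le {φ : ℝ → ℝ}
    (hX : ∀ s ∈ Icc a b, HasDerivWithinAt X (X' s) (Icc a b) s) (hφ : ContinuousOn φ (Icc a b))
    (hφ0 : ∀ s ∈ Icc a b, 0 ≤ φ s) (hle : ∀ s ∈ Icc a b, inner ℝ (X s) (X' s) ≤ ‖X s‖ * φ s)
    (ht : t ∈ Icc a b) : ‖X t‖ ≤ ‖X a‖ + ∫ s in a..t, φ s := by
  have hβ (s) (hs : s ∈ Icc a b) :
      HasDerivWithinAt (fun t => ‖X a‖ + ∫ s in a..t, φ s) (φ s) (Icc a b) s :=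
    (hasDerivWithinAt_integral_Icc hφ hs).const_add _
  have toRight {s} (hs : s ∈ Ico a b) : Icc a b ∈ 𝓝[≥] s := Icc_mem_nhdsGE_of_mem hs
  refine norm_le_of_inner_deriv_right_le_mul_deriv (fun s hs => (hX s hs).continuousWithinAt)
    (fun s hs => (hX s (Ico_subset_Icc_self hs)).mono_of_mem_nhdsWithin (toRight hs))
    (fun s hs => (hβ s hs).continuousWithinAt)
    (fun s hs => (hβ s (Ico_subset_Icc_self hs)).mono_of_mem_nhdsWithin (toRight hs))
    (fun s hs => ?_) (by simp) (fun s hs => hle s (Ico_subset_Icc_self hs)) ht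
  exact add_nonneg (norm_nonneg _) (intervalIntegral.integral_nonneg hs.1 fun r hr =>
    hφ0 r ⟨hr.1, hr.2.trans hs.2⟩)

end Fencing

/-! ### The energy estimate for an abstract wave equation -/

/-- The quantity `‖V(0)‖ + ‖V'(0)‖ + ∫₀ᵗ ‖G‖` in terms of which a solution of a wave equation with
source `G` is estimated at time `t`. -/
def dataSize {H : Type*} [NormedAddCommGroup H] (V V' G : ℝ → H) (t : ℝ) : ℝ :=
  ‖V 0‖ + ‖V' 0‖ + ∫ s in (0 : ℝ)..t, ‖G s‖

lemma norm_initial_le_dataSize {H : Type*} [NormedAddCommGroup H] (V V' G : ℝ → H) {t : ℝ}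
    (ht : 0 ≤ t) : ‖V 0‖ ≤ dataSize V V' G t := by
  have hint : 0 ≤ ∫ s in (0 : ℝ)..t, ‖G s‖ :=
    intervalIntegral.integral_nonneg ht fun _ _ => norm_nonneg _
  unfold dataSize
  linarith [norm_nonneg (V' 0)]

lemma dataSize_nonneg {H : Type*} [NormedAddCommGroup H] (V V' G : ℝ → H) {t : ℝ} (ht : 0 ≤ t) :
    0 ≤ dataSize V V' G t :=
  (norm_nonneg _).trans (norm_initial_le_dataSize V V' G ht)

lemma dataSize_comp_le {X H : Type*} [NormedAddCommGroup H] {Φ : X → H} {N : X → ℝ≥0∞}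
    (hΦ : ∀ f, ‖Φ f‖ₑ ≤ N f) {u u' F : ℝ → X} {t Y : ℝ} (ht : 0 ≤ t) (hY0 : 0 ≤ Y)
    (hY : N (u 0) + N (u' 0) + ∫⁻ s in Icc 0 t, N (F s) ≤ ENNReal.ofReal Y) :
    dataSize (fun s => Φ (u s)) (fun s => Φ (u' s)) (fun s => Φ (F s)) t ≤ Y := by
  have hsource : ENNReal.ofReal (∫ s in (0 : ℝ)..t, ‖Φ (F s)‖) ≤ ∫⁻ s in Icc 0 t, N (F s) := by
    rw [intervalIntegral.integral_of_le ht, ← integral_Icc_eq_integral_Ioc]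
    calc ENNReal.ofReal (∫ s in Icc 0 t, ‖Φ (F s)‖) ≤ ‖∫ s in Icc 0 t, ‖Φ (F s)‖‖ₑ :=
          Real.ofReal_le_enorm _
      _ ≤ ∫⁻ s in Icc 0 t, ‖‖Φ (F s)‖‖ₑ := enorm_integral_le_lintegral_enorm _
      _ ≤ ∫⁻ s in Icc 0 t, N (F s) := lintegral_mono fun s => by
          rw [enorm_norm]; exact hΦ (F s)
  refine (ENNReal.ofReal_le_ofReal_iff hY0).1 (le_trans ?_ hY)
  refine ENNReal.ofReal_add_le.trans (add_le_add (ENNReal.ofReal_add_le.trans ?_) hsource)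
  rw [ofReal_norm, ofReal_norm]
  exact add_le_add (hΦ _) (hΦ _)

/-- `V` solves `V'' = -D†DV + G` on `[0, T]`, where `V'` is its first derivative; the second
derivative is not named separately, and derivatives are one-sided at the end points. -/
structure IsWaveSolution {H K : Type*} [NormedAddCommGroup H] [InnerProductSpace ℝ H]
    [CompleteSpace H] [NormedAddCommGroup K] [InnerProductSpace ℝ K] [CompleteSpace K]
    (D : H →L[ℝ] K) (T : ℝ) (V V' G : ℝ → H) : Prop where
  hasDerivWithinAt : ∀ t ∈ Icc 0 T, HasDerivWithinAt V (V' t) (Icc 0 T) t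
  hasDerivWithinAt_deriv : ∀ t ∈ Icc 0 T, HasDerivWithinAt V' (G t - (D†) (D (V t))) (Icc 0 T) t
  continuousOn_source : ContinuousOn G (Icc 0 T)

namespace IsWaveSolution

variable {H K : Type*} [NormedAddCommGroup H] [InnerProductSpace ℝ H] [CompleteSpace H]
  [NormedAddCommGroup K] [InnerProductSpace ℝ K] [CompleteSpace K] {D : H →L[ℝ] K} {T t : ℝ}
  {V V' G : ℝ → H}

lemma continuousOn (hV : IsWaveSolution D T V V' G) : ContinuousOn V (Icc 0 T) :=
  fun t ht => (hV.hasDerivWithinAt t ht).continuousWithinAt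

lemma intervalIntegrable_norm_source (hV : IsWaveSolution D T V V' G) {s : ℝ} (hs : s ∈ Icc 0 T)
    (ht : t ∈ Icc 0 T) : IntervalIntegrable (fun r => ‖G r‖) volume s t :=
  (hV.continuousOn_source.norm.mono (uIcc_subset_Icc hs ht)).intervalIntegrable

lemma dataSize_mono (hV : IsWaveSolution D T V V' G) : MonotoneOn (dataSize V V' G) (Icc 0 T) := by
  intro s hs t ht hst
  have h0 : (0 : ℝ) ∈ Icc 0 T := ⟨le_rfl, hs.1.trans hs.2⟩
  have := intervalIntegral.integral_mono_interval le_rfl hs.1 hst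
    (ae_of_all _ fun _ => norm_nonneg _) (hV.intervalIntegrable_norm_source h0 ht)
  unfold dataSize
  gcongr

lemma norm_energy_le (hV : IsWaveSolution D T V V' G) (ht : t ∈ Icc 0 T) :
    ‖WithLp.toLp 2 (V' t, D (V t))‖ ≤
      ‖WithLp.toLp 2 (V' 0, D (V 0))‖ + ∫ s in (0 : ℝ)..t, ‖G s‖ := by
  refine norm_le_add_integral_of_inner_deriv_le
    (X := fun s => WithLp.toLp 2 (V' s, D (V s)))
    (X' := fun s => WithLp.toLp 2 (G s - (D†) (D (V s)), D (V' s)))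
    (fun s hs => ?_) hV.continuousOn_source.norm (fun _ _ => norm_nonneg _) (fun s _ => ?_) ht
  · exact (WithLp.prodContinuousLinearEquiv 2 ℝ H K).symm.toContinuousLinearMap.hasFDerivAt
      |>.comp_hasDerivWithinAt s ((hV.hasDerivWithinAt_deriv s hs).prodMk
        (D.hasFDerivAt.comp_hasDerivWithinAt s (hV.hasDerivWithinAt s hs)))
  · calc inner ℝ (WithLp.toLp 2 (V' s, D (V s))) (WithLp.toLp 2 (G s - (D†) (D (V s)), D (V' s)))
        = inner ℝ (V' s) (G s) := by
          rw [WithLp.prod_inner_apply]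
          simp only
          rw [inner_sub_right, ContinuousLinearMap.adjoint_inner_right,
            real_inner_comm (D (V s)) (D (V' s))]
          ring
      _ ≤ ‖V' s‖ * ‖G s‖ := real_inner_le_norm _ _
      _ ≤ ‖WithLp.toLp 2 (V' s, D (V s))‖ * ‖G s‖ := by
          gcongr
          exact WithLp.norm_fst_le _ (WithLp.toLp 2 (V' s, D (V s)))

lemma norm_energy_le_dataSize (hV : IsWaveSolution D T V V' G) (ht : t ∈ Icc 0 T) :
    ‖WithLp.toLp 2 (V' t, D (V t))‖ ≤ (1 + ‖D‖) * dataSize V V' G t := by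
  have hinit : ‖WithLp.toLp 2 (V' 0, D (V 0))‖ ≤ ‖V' 0‖ + ‖D‖ * ‖V 0‖ := by
    rw [WithLp.prod_norm_eq_of_L2]
    refine Real.sqrt_le_iff.2 ⟨by positivity, ?_⟩
    calc ‖V' 0‖ ^ 2 + ‖D (V 0)‖ ^ 2 ≤ ‖V' 0‖ ^ 2 + (‖D‖ * ‖V 0‖) ^ 2 := by
          gcongr; exact D.le_opNorm _
      _ ≤ (‖V' 0‖ + ‖D‖ * ‖V 0‖) ^ 2 := by
          nlinarith [mul_nonneg (norm_nonneg (V' 0))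
            (mul_nonneg (norm_nonneg D) (norm_nonneg (V 0)))]
  calc ‖WithLp.toLp 2 (V' t, D (V t))‖
      ≤ (‖V' 0‖ + ∫ s in (0 : ℝ)..t, ‖G s‖) + ‖D‖ * ‖V 0‖ := by
        linarith [hV.norm_energy_le ht]
    _ ≤ dataSize V V' G t + ‖D‖ * dataSize V V' G t := by
        gcongr
        · unfold dataSize; linarith [norm_nonneg (V 0)]
        · exact norm_initial_le_dataSize V V' G ht.1
    _ = (1 + ‖D‖) * dataSize V V' G t := by ring

lemma norm_deriv_le (hV : IsWaveSolution D T V V' G) (ht : t ∈ Icc 0 T) :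
    ‖V' t‖ ≤ (1 + ‖D‖) * dataSize V V' G t :=
  (WithLp.norm_fst_le _ (WithLp.toLp 2 (V' t, D (V t)))).trans
    (hV.norm_energy_le_dataSize ht)

lemma norm_gradient_le (hV : IsWaveSolution D T V V' G) (ht : t ∈ Icc 0 T) :
    ‖D (V t)‖ ≤ (1 + ‖D‖) * dataSize V V' G t :=
  (WithLp.norm_snd_le _ (WithLp.toLp 2 (V' t, D (V t)))).trans
    (hV.norm_energy_le_dataSize ht)

lemma norm_le (hV : IsWaveSolution D T V V' G) (ht : t ∈ Icc 0 T) :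
    ‖V t‖ ≤ (1 + ‖D‖) * dataSize V V' G t * (1 + t) := by
  have hsub : Icc 0 t ⊆ Icc 0 T := Icc_subset_Icc_right ht.2
  have hmean : ‖V t - V 0‖ ≤ (1 + ‖D‖) * dataSize V V' G t * (t - 0) :=
    norm_image_sub_le_of_norm_deriv_le_segment'
      (fun s hs => (hV.hasDerivWithinAt s (hsub hs)).mono hsub)
      (fun s hs => (hV.norm_deriv_le (hsub (Ico_subset_Icc_self hs))).trans
        (by gcongr; exact hV.dataSize_mono (hsub (Ico_subset_Icc_self hs)) ht hs.2.le))
      t (right_mem_Icc.2 ht.1)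
  have hinit : ‖V 0‖ ≤ (1 + ‖D‖) * dataSize V V' G t :=
    calc ‖V 0‖ ≤ 1 * dataSize V V' G t := by
          rw [one_mul]; exact norm_initial_le_dataSize V V' G ht.1
      _ ≤ (1 + ‖D‖) * dataSize V V' G t := by
          gcongr
          · exact dataSize_nonneg V V' G ht.1
          · exact le_add_of_nonneg_right (norm_nonneg D)
  calc ‖V t‖ ≤ ‖V t - V 0‖ + ‖V 0‖ := by simpa using norm_add_le (V t - V 0) (V 0)
    _ ≤ (1 + ‖D‖) * dataSize V V' G t * (t - 0) + (1 + ‖D‖) * dataSize V V' G t := by gcongr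
    _ = (1 + ‖D‖) * dataSize V V' G t * (1 + t) := by ring

lemma norm_le_and_norm_deriv_le (hV : IsWaveSolution D T V V' G) (ht : t ∈ Icc 0 T) {Y : ℝ}
    (hY : dataSize V V' G t ≤ Y) :
    ‖V t‖ ≤ (1 + ‖D‖) * Y * (1 + t) ∧ ‖V' t‖ ≤ (1 + ‖D‖) * Y * (1 + t) := by
  have ht0 : 0 ≤ t := ht.1
  have hY0 : 0 ≤ Y := (dataSize_nonneg V V' G ht0).trans hY
  constructor
  · calc ‖V t‖ ≤ (1 + ‖D‖) * dataSize V V' G t * (1 + t) := hV.norm_le ht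
      _ ≤ (1 + ‖D‖) * Y * (1 + t) := by gcongr
  · calc ‖V' t‖ ≤ (1 + ‖D‖) * dataSize V V' G t := hV.norm_deriv_le ht
      _ ≤ (1 + ‖D‖) * Y := by gcongr
      _ ≤ (1 + ‖D‖) * Y * (1 + t) := le_mul_of_one_le_right (by positivity) (by linarith)

lemma map (hV : IsWaveSolution D T V V' G) (W : H →L[ℝ] H) :
    IsWaveSolution D T (fun t => W (V t)) (fun t => W (V' t))
      (fun t => W (G t) + ((D†) (D (W (V t))) - W ((D†) (D (V t))))) where
  hasDerivWithinAt t ht := W.hasFDerivAt.comp_hasDerivWithinAt t (hV.hasDerivWithinAt t ht)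
  hasDerivWithinAt_deriv t ht := by
    refine (W.hasFDerivAt.comp_hasDerivWithinAt t (hV.hasDerivWithinAt_deriv t ht)).congr_deriv ?_
    rw [map_sub]
    abel
  continuousOn_source := by
    have := hV.continuousOn
    have := hV.continuousOn_source
    fun_prop

lemma dataSize_map_le (hV : IsWaveSolution D T V V' G) (W : H →L[ℝ] H) {α β : ℝ} (hα : 0 ≤ α)
    (hβ : 0 ≤ β) (hW : ∀ v, ‖(D†) (D (W v)) - W ((D†) (D v))‖ ≤ α * ‖D v‖ + β * ‖v‖)
    (ht : t ∈ Icc 0 T) :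
    dataSize (fun t => W (V t)) (fun t => W (V' t))
        (fun t => W (G t) + ((D†) (D (W (V t))) - W ((D†) (D (V t))))) t ≤
      dataSize (fun t => W (V t)) (fun t => W (V' t)) (fun t => W (G t)) t +
        (α + β * (1 + t)) * ((1 + ‖D‖) * dataSize V V' G t) * t := by
  have hsource (s) (hs : s ∈ Icc 0 t) : ‖W (G s) + ((D†) (D (W (V s))) - W ((D†) (D (V s))))‖ ≤
      ‖W (G s)‖ + (α + β * (1 + t)) * ((1 + ‖D‖) * dataSize V V' G t) := by
    have hs' : s ∈ Icc 0 T := ⟨hs.1, hs.2.trans ht.2⟩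
    have hdata : (1 + ‖D‖) * dataSize V V' G s ≤ (1 + ‖D‖) * dataSize V V' G t := by
      gcongr; exact hV.dataSize_mono hs' ht hs.2
    calc _ ≤ ‖W (G s)‖ + (α * ‖D (V s)‖ + β * ‖V s‖) :=
          (norm_add_le _ _).trans (by gcongr; exact hW _)
      _ ≤ ‖W (G s)‖ + (α * ((1 + ‖D‖) * dataSize V V' G t) +
          β * ((1 + ‖D‖) * dataSize V V' G t * (1 + t))) := by
        gcongr
        · exact (hV.norm_gradient_le hs').trans hdata
        · refine (hV.norm_le hs').trans ?_
          exact mul_le_mul hdata (by linarith [hs.2]) (by linarith [hs.1])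
            (mul_nonneg (by positivity) (dataSize_nonneg V V' G ht.1))
      _ = _ := by ring
  have h0 : (0 : ℝ) ∈ Icc 0 T := ⟨le_rfl, ht.1.trans ht.2⟩
  have hWG : IntervalIntegrable (fun s => ‖W (G s)‖) volume 0 t :=
    ((W.continuous.comp_continuousOn hV.continuousOn_source).norm.mono
      (uIcc_subset_Icc h0 ht)).intervalIntegrable
  have hint := intervalIntegral.integral_mono_on ht.1
    ((hV.map W).intervalIntegrable_norm_source h0 ht)
    (hWG.add intervalIntegrable_const) hsource
  rw [intervalIntegral.integral_add hWG intervalIntegrable_const, intervalIntegral.integral_const,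
    smul_eq_mul, sub_zero] at hint
  unfold dataSize at *
  linarith

end IsWaveSolution

/-! ### Differences and multiplication operators on `ℓᵖ` of a group -/

lemma memℓp_comp_equiv {α β E : Type*} [NormedAddCommGroup E] {p : ℝ≥0∞} (σ : β ≃ α) {f : α → E}
    (hf : Memℓp f p) : Memℓp (f ∘ σ) p := by
  rcases p.trichotomy with rfl | rfl | hp
  · exact memℓp_zero ((memℓp_zero_iff.1 hf).preimage σ.injective.injOn)
  · exact memℓp_infty (hf.bddAbove.mono (range_comp_subset_range σ fun a => ‖f a‖))
  · exact memℓp_gen ((σ.summable_iff (f := fun a => ‖f a‖ ^ p.toReal)).2 (hf.summable hp))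

section WeightMul

variable {α E : Type*} [NormedAddCommGroup E] [NormedSpace ℝ E] {p : ℝ≥0∞} [Fact (1 ≤ p)]

/-- Multiplication of elements of `ℓᵖ(α; E)` by a bounded weight. -/
def weightMul : lp (fun _ : α => ℝ) ∞ →L[ℝ] lp (fun _ : α => E) p →L[ℝ] lp (fun _ : α => E) p :=
  lp.holderL p (fun _ => ContinuousLinearMap.lsmul ℝ ℝ) (K := 1)
    fun _ => ContinuousLinearMap.opNorm_lsmul_le

lemma weightMul_apply (w : lp (fun _ : α => ℝ) ∞) (h : lp (fun _ : α => E) p) (x : α) :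
    weightMul w h x = w x • h x := rfl

lemma norm_weightMul_le (w : lp (fun _ : α => ℝ) ∞) (h : lp (fun _ : α => E) p) :
    ‖weightMul w h‖ ≤ ‖w‖ * ‖h‖ := by
  have hop := lp.norm_holderL_le (p := ∞) (q := p) p
    (fun _ : α => ContinuousLinearMap.lsmul ℝ ℝ (E := E)) (K := 1)
    fun _ => ContinuousLinearMap.opNorm_lsmul_le
  have := ContinuousLinearMap.le_of_opNorm₂_le_of_le _ hop le_rfl le_rfl (x := w) (y := h)
  exact this.trans_eq (by rw [NNReal.coe_one, one_mul])

end WeightMul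

section Differences

variable {A E : Type*} [AddCommGroup A] [NormedAddCommGroup E] [NormedSpace ℝ E] {p : ℝ≥0∞}
  [Fact (1 ≤ p)]

/-- Translation `(τ_v h)(x) = h(x + v)` on `ℓᵖ(A; E)`. -/
def shift (v : A) : lp (fun _ : A => E) p →ₗᵢ[ℝ] lp (fun _ : A => E) p where
  toFun h := ⟨h ∘ Equiv.addRight v, memℓp_comp_equiv _ (lp.memℓp h)⟩
  map_add' _ _ := rfl
  map_smul' _ _ := rfl
  norm_map' h := by
    rcases p.dichotomy with rfl | hp
    · rw [lp.norm_eq_ciSup, lp.norm_eq_ciSup]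
      exact (Equiv.addRight v).iSup_comp (g := fun x => ‖h x‖)
    · rw [lp.norm_eq_tsum_rpow (by linarith), lp.norm_eq_tsum_rpow (by linarith)]
      exact congrArg (· ^ (1 / p.toReal)) ((Equiv.addRight v).tsum_eq fun x => ‖h x‖ ^ p.toReal)

lemma shift_apply (v : A) (h : lp (fun _ : A => E) p) (x : A) : shift v h x = h (x + v) := rfl

/-- The difference operator `(∂_v h)(x) = h(x + v) - h(x)` on `ℓᵖ(A; E)`. -/
def difference (v : A) : lp (fun _ : A => E) p →L[ℝ] lp (fun _ : A => E) p :=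
  (shift v).toContinuousLinearMap - ContinuousLinearMap.id ℝ _

lemma difference_eq (v : A) (h : lp (fun _ : A => E) p) : difference v h = shift v h - h := rfl

lemma difference_apply (v : A) (h : lp (fun _ : A => E) p) (x : A) :
    difference v h x = h (x + v) - h x := rfl

variable {ι : Type*} [Fintype ι]

/-- The Laplacian `(Δh)(x) = ∑ᵢ (h(x + eᵢ) + h(x - eᵢ) - 2h(x))` on `ℓᵖ(A; E)` of the Cayley graph
with steps `± eᵢ`. -/
def discreteLaplacian (e : ι → A) : lp (fun _ : A => E) p →L[ℝ] lp (fun _ : A => E) p :=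
  ∑ i, ((shift (e i)).toContinuousLinearMap +
    (shift (-e i)).toContinuousLinearMap - (2 : ℝ) • ContinuousLinearMap.id ℝ _)

lemma discreteLaplacian_eq (e : ι → A) (h : lp (fun _ : A => E) p) :
    discreteLaplacian e h = ∑ i, (shift (e i) h + shift (-e i) h - (2 : ℝ) • h) := by
  simp only [discreteLaplacian, sum_apply]
  rfl

lemma discreteLaplacian_apply (e : ι → A) (h : lp (fun _ : A => E) p) (x : A) :
    discreteLaplacian e h x = ∑ i, (h (x + e i) + h (x - e i) - (2 : ℝ) • h x) := by
  rw [discreteLaplacian_eq, lp.coeFn_sum, Finset.sum_apply]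
  exact Finset.sum_congr rfl fun i _ => by rw [sub_eq_add_neg x]; rfl

lemma discreteLaplacian_weightMul (e : ι → A) (w : lp (fun _ : A => ℝ) ∞)
    (h : lp (fun _ : A => E) p) :
    discreteLaplacian e (weightMul w h) = weightMul w (discreteLaplacian e h) +
      ∑ i, (weightMul (difference (e i) w) (difference (e i) h) +
        shift (-e i) (weightMul (difference (e i) w) (difference (e i) h))) +
      weightMul (discreteLaplacian e w) h := by
  ext x
  simp only [lp.coeFn_add, lp.coeFn_sum, Pi.add_apply, Finset.sum_apply, discreteLaplacian_apply,
    weightMul_apply, shift_apply, difference_apply, Finset.smul_sum, Finset.sum_smul,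
    ← Finset.sum_add_distrib, ← sub_eq_add_neg, sub_add_cancel]
  refine Finset.sum_congr rfl fun i _ => ?_
  simp only [smul_eq_mul]
  module

end Differences

section Gradient

variable {A E ι : Type*} [AddCommGroup A] [NormedAddCommGroup E] [InnerProductSpace ℝ E]

/-- The gradient `∇h = (∂_{eᵢ} h)ᵢ` with respect to the steps `eᵢ`. -/
def discreteGradient (e : ι → A) :
    lp (fun _ : A => E) 2 →L[ℝ] PiLp 2 fun _ : ι => lp (fun _ : A => E) 2 :=
  (PiLp.continuousLinearEquiv 2 ℝ fun _ : ι => lp (fun _ : A => E) 2).symm.toContinuousLinearMap ∘L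
    ContinuousLinearMap.pi fun i => difference (e i)

lemma discreteGradient_apply (e : ι → A) (h : lp (fun _ : A => E) 2) (i : ι) :
    discreteGradient e h i = difference (e i) h := rfl

variable [Fintype ι]

lemma inner_shift_neg (v : A) (g h : lp (fun _ : A => E) 2) :
    inner ℝ g (shift (-v) h) = inner ℝ (shift v g) h := by
  rw [← LinearIsometry.inner_map_map (shift v)]
  congr 1
  ext x
  simp only [shift_apply, add_neg_cancel_right]

lemma inner_discreteGradient (e : ι → A) (g h : lp (fun _ : A => E) 2) :
    inner ℝ (discreteGradient e g) (discreteGradient e h) = inner ℝ g (-discreteLaplacian e h) := by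
  rw [PiLp.inner_apply, discreteLaplacian_eq, inner_neg_right, inner_sum, ← Finset.sum_neg_distrib]
  refine Finset.sum_congr rfl fun i _ => ?_
  rw [discreteGradient_apply, discreteGradient_apply, difference_eq, difference_eq,
    inner_sub_right g, inner_add_right, inner_shift_neg, inner_smul_right, inner_sub_left,
    inner_sub_right, inner_sub_right, LinearIsometry.inner_map_map]
  ring

lemma adjoint_discreteGradient_discreteGradient [CompleteSpace E] (e : ι → A)
    (h : lp (fun _ : A => E) 2) :
    ((discreteGradient e)†) (discreteGradient e h) = -discreteLaplacian e h :=
  ext_inner_left ℝ fun g => by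
    rw [ContinuousLinearMap.adjoint_inner_right, inner_discreteGradient]

lemma norm_discreteLaplacian_weightMul_sub_le (e : ι → A) (w : lp (fun _ : A => ℝ) ∞)
    (h : lp (fun _ : A => E) 2) :
    ‖discreteLaplacian e (weightMul w h) - weightMul w (discreteLaplacian e h)‖ ≤
      2 * (∑ i, ‖difference (e i) w‖) * ‖discreteGradient e h‖ + ‖discreteLaplacian e w‖ * ‖h‖ := by
  have hprod (i : ι) : ‖weightMul (difference (e i) w) (difference (e i) h)‖ ≤
      ‖difference (e i) w‖ * ‖discreteGradient e h‖ :=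
    (norm_weightMul_le _ _).trans (by gcongr; exact PiLp.norm_apply_le (discreteGradient e h) i)
  rw [discreteLaplacian_weightMul, add_assoc, add_sub_cancel_left]
  refine (norm_add_le _ _).trans (add_le_add ((norm_sum_le _ _).trans ?_) (norm_weightMul_le _ _))
  calc _ ≤ ∑ i, 2 * (‖difference (e i) w‖ * ‖discreteGradient e h‖) := by
        refine Finset.sum_le_sum fun i _ => (norm_add_le _ _).trans ?_
        rw [LinearIsometry.norm_map]
        linarith [hprod i]
    _ = 2 * (∑ i, ‖difference (e i) w‖) * ‖discreteGradient e h‖ := by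
        rw [← Finset.mul_sum, ← Finset.sum_mul, mul_assoc]

end Gradient

namespace IsWaveSolution

variable {A E ι : Type*} [AddCommGroup A] [NormedAddCommGroup E] [InnerProductSpace ℝ E]
  [CompleteSpace E] [Fintype ι] {e : ι → A} {T t Y : ℝ} {V V' G : ℝ → lp (fun _ : A => E) 2}
  {w : lp (fun _ : A => ℝ) ∞}

lemma exists_isWaveSolution_weightMul (hV : IsWaveSolution (discreteGradient e) T V V' G)
    (ht : t ∈ Icc 0 T)
    (hw : ∑ i, ‖difference (e i) w‖ ≤ 1) (hΔw : ‖discreteLaplacian e w‖ * (1 + t) ≤ 1)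
    (hY : dataSize V V' G t ≤ Y)
    (hwY : dataSize (fun s => weightMul w (V s)) (fun s => weightMul w (V' s))
      (fun s => weightMul w (G s)) t ≤ Y) :
    ∃ G', IsWaveSolution (discreteGradient e) T (fun s => weightMul w (V s))
        (fun s => weightMul w (V' s)) G' ∧
      dataSize (fun s => weightMul w (V s)) (fun s => weightMul w (V' s)) G' t ≤
        3 * (1 + ‖discreteGradient e (E := E)‖) * Y * (1 + t) := by
  set c := 1 + ‖discreteGradient e (E := E)‖ with hc
  have ht0 : 0 ≤ t := ht.1
  have hY0 : 0 ≤ Y := (dataSize_nonneg V V' G ht0).trans hY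
  have hc1 : 1 ≤ c := le_add_of_nonneg_right (ContinuousLinearMap.opNorm_nonneg _)
  have hcomm (v : lp (fun _ : A => E) 2) :
      ‖((discreteGradient e)†) (discreteGradient e (weightMul w v)) -
        weightMul w (((discreteGradient e)†) (discreteGradient e v))‖ ≤
      2 * ‖discreteGradient e v‖ + ‖discreteLaplacian e w‖ * ‖v‖ := by
    rw [adjoint_discreteGradient_discreteGradient, adjoint_discreteGradient_discreteGradient,
      map_neg, ← neg_sub', norm_neg]
    refine (norm_discreteLaplacian_weightMul_sub_le e w v).trans ?_
    gcongr
    linarith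
  refine ⟨_, hV.map (weightMul w), (hV.dataSize_map_le (weightMul w) zero_le_two (norm_nonneg _)
    hcomm ht).trans ?_⟩
  calc _ ≤ Y + (2 + 1) * (c * Y) * t := by
        rw [← hc]
        gcongr
        exact mul_nonneg (zero_le_one.trans hc1) (dataSize_nonneg V V' G ht0)
    _ ≤ 3 * c * Y + 3 * c * Y * t := by nlinarith
    _ = 3 * c * Y * (1 + t) := by ring

lemma norm_weightMul_deriv_le (hV : IsWaveSolution (discreteGradient e) T V V' G)
    (ht : t ∈ Icc 0 T)
    (hw : ∑ i, ‖difference (e i) w‖ ≤ 1) (hΔw : ‖discreteLaplacian e w‖ * (1 + t) ≤ 1)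
    (hY : dataSize V V' G t ≤ Y)
    (hwY : dataSize (fun s => weightMul w (V s)) (fun s => weightMul w (V' s))
      (fun s => weightMul w (G s)) t ≤ Y) :
    ‖weightMul w (V' t)‖ ≤ 3 * (1 + ‖discreteGradient e (E := E)‖) ^ 2 * Y * (1 + t) := by
  obtain ⟨G', hwV, hG'⟩ := hV.exists_isWaveSolution_weightMul ht hw hΔw hY hwY
  calc ‖weightMul w (V' t)‖ ≤ (1 + ‖discreteGradient e (E := E)‖) *
        (3 * (1 + ‖discreteGradient e (E := E)‖) * Y * (1 + t)) :=
        (hwV.norm_deriv_le ht).trans (by gcongr)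
    _ = _ := by ring

lemma norm_weightMul_le (hV : IsWaveSolution (discreteGradient e) T V V' G) (ht : t ∈ Icc 0 T)
    (hw : ∑ i, ‖difference (e i) w‖ ≤ 1) (hΔw : ‖discreteLaplacian e w‖ * (1 + t) ≤ 1)
    (hY : dataSize V V' G t ≤ Y)
    (hwY : dataSize (fun s => weightMul w (V s)) (fun s => weightMul w (V' s))
      (fun s => weightMul w (G s)) t ≤ Y) :
    ‖weightMul w (V t)‖ ≤ 3 * (1 + ‖discreteGradient e (E := E)‖) ^ 2 * Y * (1 + t) ^ 2 := by
  obtain ⟨G', hwV, hG'⟩ := hV.exists_isWaveSolution_weightMul ht hw hΔw hY hwY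
  have ht0 : 0 ≤ t := ht.1
  calc ‖weightMul w (V t)‖ ≤ (1 + ‖discreteGradient e (E := E)‖) *
        (3 * (1 + ‖discreteGradient e (E := E)‖) * Y * (1 + t)) * (1 + t) :=
        (hwV.norm_le ht).trans (by gcongr)
    _ = _ := by ring

end IsWaveSolution

/-! ### Bounded approximations of the coordinate weights on `ℤ^d` -/

section SineWeight

variable {d : ℕ}

/-- The `i`-th standard basis vector of `ℤ^d`. -/
abbrev unitVec (i : Fin d) : Fin d → ℤ := Pi.single i 1

lemma abs_sin_mul_div_le (ε x : ℝ) : |Real.sin (ε * x) / ε| ≤ |ε|⁻¹ := by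
  rw [abs_div, div_eq_mul_inv]
  exact mul_le_of_le_one_left (by positivity) (Real.abs_sin_le_one _)

/-- The bounded weight `x ↦ sin(ε xⱼ) / ε`, which tends to the unbounded weight `xⱼ` as `ε → 0`
and is almost harmonic; it vanishes for `ε = 0`. -/
def sinWeight (j : Fin d) (ε : ℝ) : lp (fun _ : Fin d → ℤ => ℝ) ∞ :=
  ⟨fun x => Real.sin (ε * x j) / ε,
    memℓp_infty ⟨|ε|⁻¹, forall_mem_range.2 fun x => abs_sin_mul_div_le ε (x j)⟩⟩

lemma sinWeight_apply (j : Fin d) (ε : ℝ) (x : Fin d → ℤ) :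
    sinWeight j ε x = Real.sin (ε * x j) / ε := rfl

lemma norm_sinWeight_le (j : Fin d) (ε : ℝ) : ‖sinWeight j ε‖ ≤ |ε|⁻¹ :=
  lp.norm_le_of_forall_le (by positivity) fun x => abs_sin_mul_div_le ε (x j)

lemma abs_sinWeight_sub_le (j : Fin d) (ε : ℝ) (x y : Fin d → ℤ) :
    |sinWeight j ε x - sinWeight j ε y| ≤ |(x j : ℝ) - y j| := by
  rw [sinWeight_apply, sinWeight_apply, ← sub_div, abs_div]
  refine div_le_of_le_mul₀ (abs_nonneg _) (abs_nonneg _) ?_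
  calc |Real.sin (ε * x j) - Real.sin (ε * y j)| ≤ |ε * x j - ε * y j| :=
        Real.abs_sin_sub_sin_le _ _
    _ = |(x j : ℝ) - y j| * |ε| := by rw [← mul_sub, abs_mul, mul_comm]

lemma abs_sinWeight_le (j : Fin d) (ε : ℝ) (x : Fin d → ℤ) : |sinWeight j ε x| ≤ |(x j : ℝ)| := by
  simpa [sinWeight_apply] using abs_sinWeight_sub_le j ε x 0

lemma norm_difference_sinWeight_le (v : Fin d → ℤ) (j : Fin d) (ε : ℝ) :
    ‖difference v (sinWeight j ε)‖ ≤ |(v j : ℝ)| :=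
  lp.norm_le_of_forall_le (abs_nonneg _) fun x => by
    simpa [difference_apply] using abs_sinWeight_sub_le j ε (x + v) x

lemma sum_norm_difference_sinWeight_le (j : Fin d) (ε : ℝ) :
    ∑ i, ‖difference (unitVec i) (sinWeight j ε)‖ ≤ 1 :=
  calc ∑ i, ‖difference (unitVec i) (sinWeight j ε)‖ ≤ ∑ i, |((unitVec i j : ℤ) : ℝ)| :=
        Finset.sum_le_sum fun i _ => norm_difference_sinWeight_le _ j ε
    _ = 1 := by
        rw [Finset.sum_eq_single j (fun i _ hij => by simp [hij.symm]) (by simp)]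
        simp

lemma discreteLaplacian_sinWeight (j : Fin d) (ε : ℝ) :
    discreteLaplacian unitVec (sinWeight j ε) = (2 * (Real.cos ε - 1)) • sinWeight j ε := by
  ext x
  rw [discreteLaplacian_apply, Finset.sum_eq_single j]
  · simp only [lp.coeFn_smul, Pi.smul_apply, sinWeight_apply, Pi.add_apply, Pi.sub_apply,
      Pi.single_eq_same, Int.cast_add, Int.cast_sub, Int.cast_one, mul_add, mul_sub, mul_one,
      Real.sin_add, Real.sin_sub, smul_eq_mul]
    ring
  · intro i _ hij
    simp only [sinWeight_apply, Pi.add_apply, Pi.sub_apply, Pi.single_eq_of_ne hij.symm, add_zero,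
      sub_zero, smul_eq_mul]
    ring
  · simp

lemma norm_discreteLaplacian_sinWeight_le (j : Fin d) (ε : ℝ) :
    ‖discreteLaplacian unitVec (sinWeight j ε)‖ ≤ |ε| := by
  have hcos : |2 * (Real.cos ε - 1)| ≤ |ε| * |ε| := by
    rw [abs_mul_abs_self, abs_le]
    constructor <;> nlinarith [Real.one_sub_sq_div_two_le_cos (x := ε), Real.cos_le_one ε]
  calc ‖discreteLaplacian unitVec (sinWeight j ε)‖
      = |2 * (Real.cos ε - 1)| * ‖sinWeight j ε‖ := by
        rw [discreteLaplacian_sinWeight, norm_smul, Real.norm_eq_abs]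
    _ ≤ |ε| * |ε| * |ε|⁻¹ := by gcongr; exact norm_sinWeight_le j ε
    _ ≤ |ε| := mul_self_mul_inv |ε| |>.le

lemma tendsto_sinWeight (j : Fin d) (x : Fin d → ℤ) :
    Tendsto (fun ε => sinWeight j ε x) (𝓝[>] 0) (𝓝 (x j : ℝ)) := by
  have hsin : HasDerivAt (fun ε : ℝ => Real.sin (ε * x j)) (x j : ℝ) 0 := by
    simpa using ((hasDerivAt_id (0 : ℝ)).mul_const (x j : ℝ)).sin
  refine (hsin.tendsto_slope.mono_left (nhdsWithin_mono _ fun ε => ne_of_gt)).congr fun ε => ?_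
  simp [slope_def_field, sinWeight_apply]

end SineWeight

/-! ### The weighted norms on `ℓ²(ℤ^d)` -/

/-- The space `ℓ²(ℤ^d; ℂ)`, which is always regarded as a real Hilbert space. -/
abbrev L2 (d : ℕ) : Type := lp (fun _ : Fin d → ℤ => ℂ) 2

section WeightedNorms

variable {d : ℕ}

lemma lpn_two (f : (Fin d → ℤ) → ℂ) : lpn 2 f = (∑' x, ‖f x‖ₑ ^ 2) ^ (1 / 2 : ℝ) := by
  simp only [lpn, ENNReal.ofNat_ne_top, if_false, ENNReal.toReal_ofNat, ENNReal.rpow_ofNat]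
  rfl

lemma hasSum_norm_sq (h : L2 d) : HasSum (fun x => ‖h x‖ ^ 2) (‖h‖ ^ 2) := by
  simpa using lp.hasSum_norm (p := 2) (by simp) h

lemma lpn_two_coe (h : L2 d) : lpn 2 (h : (Fin d → ℤ) → ℂ) = ‖h‖ₑ := by
  have hsum : ∑' x, ‖h x‖ₑ ^ 2 = ‖h‖ₑ ^ 2 := by
    simp only [← ofReal_norm, ← ENNReal.ofReal_pow (norm_nonneg _)]
    rw [← ENNReal.ofReal_tsum_of_nonneg (fun _ => by positivity) (hasSum_norm_sq h).summable,
      (hasSum_norm_sq h).tsum_eq]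
  rw [lpn_two, hsum, ← ENNReal.rpow_two, ← ENNReal.rpow_mul]
  norm_num

lemma memℓp_two_of_lpn_lt_top {f : (Fin d → ℤ) → ℂ} (h : lpn 2 f < ⊤) : Memℓp f 2 := by
  have hsum : ∑' x, ‖f x‖ₑ ^ 2 ≠ ⊤ := fun htop => by simp [lpn_two, htop] at h
  refine memℓp_gen ((ENNReal.summable_toReal hsum).congr fun x => ?_)
  simp

lemma lpn_two_mono {f g : (Fin d → ℤ) → ℂ} (h : ∀ x, ‖f x‖ ≤ ‖g x‖) : lpn 2 f ≤ lpn 2 g := by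
  rw [lpn_two, lpn_two]
  gcongr with x
  exact enorm_le_iff_norm_le.2 (h x)

lemma lpn_two_le_of_forall_sum_le {f : (Fin d → ℤ) → ℂ} {Y : ℝ} (hY : 0 ≤ Y)
    (h : ∀ s : Finset (Fin d → ℤ), ∑ x ∈ s, ‖f x‖ ^ 2 ≤ Y ^ 2) : lpn 2 f ≤ ENNReal.ofReal Y := by
  let f' : L2 d := ⟨f, memℓp_gen' (C := Y ^ 2) (by simpa using h)⟩
  calc lpn 2 f = ENNReal.ofReal ‖f'‖ := (lpn_two_coe f').trans (ofReal_norm f').symm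
    _ ≤ ENNReal.ofReal Y := ENNReal.ofReal_le_ofReal
        (lp.norm_le_of_forall_sum_le (by simp) hY (by simpa using h))

lemma w2_zero_s9 (f : (Fin d → ℤ) → ℂ) : w2 0 f = lpn 2 f := by simp [w2]

lemma jap_sq (x : Fin d → ℤ) : jap x ^ 2 = 1 + ∑ i, (x i : ℝ) ^ 2 :=
  Real.sq_sqrt (by positivity)

lemma one_le_jap (x : Fin d → ℤ) : 1 ≤ jap x :=
  Real.one_le_sqrt.2 (le_add_of_nonneg_right (by positivity))

lemma abs_le_jap (x : Fin d → ℤ) (j : Fin d) : |(x j : ℝ)| ≤ jap x := by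
  refine Real.abs_le_sqrt ?_
  have := Finset.single_le_sum (f := fun i => (x i : ℝ) ^ 2) (fun _ _ => by positivity)
    (Finset.mem_univ j)
  linarith

lemma norm_jap_pow_mul (k : ℕ) (x : Fin d → ℤ) (z : ℂ) :
    ‖((jap x ^ k : ℝ) : ℂ) * z‖ = jap x ^ k * ‖z‖ := by
  rw [norm_mul, Complex.norm_real, Real.norm_of_nonneg
    (pow_nonneg (zero_le_one.trans (one_le_jap x)) k)]

lemma w2_zero_le (k : ℕ) (f : (Fin d → ℤ) → ℂ) : w2 0 f ≤ w2 k f := by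
  rw [w2_zero_s9]
  refine lpn_two_mono fun x => ?_
  rw [norm_jap_pow_mul]
  exact le_mul_of_one_le_left (norm_nonneg _) (one_le_pow₀ (one_le_jap x))

lemma sum_coord_sq_mul_norm_sq_le {h : L2 d} {Y : ℝ} {j : Fin d}
    (hY : ∀ᶠ ε in 𝓝[>] 0, ‖weightMul (sinWeight j ε) h‖ ≤ Y) (s : Finset (Fin d → ℤ)) :
    ∑ x ∈ s, (x j : ℝ) ^ 2 * ‖h x‖ ^ 2 ≤ Y ^ 2 := by
  refine le_of_tendsto (tendsto_finsetSum s fun x _ =>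
    ((tendsto_sinWeight j x).pow 2).mul_const (‖h x‖ ^ 2)) ?_
  filter_upwards [hY] with ε hε
  calc ∑ x ∈ s, sinWeight j ε x ^ 2 * ‖h x‖ ^ 2
      = ∑ x ∈ s, ‖weightMul (sinWeight j ε) h x‖ ^ 2 :=
        Finset.sum_congr rfl fun x _ => by
          rw [weightMul_apply, norm_smul, mul_pow, Real.norm_eq_abs, sq_abs]
    _ ≤ ‖weightMul (sinWeight j ε) h‖ ^ 2 :=
        sum_le_hasSum s (fun _ _ => by positivity) (hasSum_norm_sq _)
    _ ≤ Y ^ 2 := by gcongr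

lemma w2_one_le {h : L2 d} {Y : ℝ} (hY : ‖h‖ ≤ Y)
    (hwY : ∀ j, ∀ᶠ ε in 𝓝[>] 0, ‖weightMul (sinWeight j ε) h‖ ≤ Y) :
    w2 1 h ≤ ENNReal.ofReal ((d + 1) * Y) := by
  have hY0 : 0 ≤ Y := (norm_nonneg _).trans hY
  refine lpn_two_le_of_forall_sum_le (by positivity) fun s => ?_
  calc ∑ x ∈ s, ‖((jap x ^ 1 : ℝ) : ℂ) * h x‖ ^ 2
      = ∑ x ∈ s, ‖h x‖ ^ 2 + ∑ j, ∑ x ∈ s, (x j : ℝ) ^ 2 * ‖h x‖ ^ 2 := by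
        rw [Finset.sum_comm, ← Finset.sum_add_distrib]
        refine Finset.sum_congr rfl fun x _ => ?_
        rw [norm_jap_pow_mul, pow_one, mul_pow, jap_sq, add_mul, one_mul, Finset.sum_mul]
    _ ≤ Y ^ 2 + ∑ _j : Fin d, Y ^ 2 := by
        gcongr with j
        · exact (sum_le_hasSum s (fun _ _ => by positivity) (hasSum_norm_sq h)).trans (by gcongr)
        · exact sum_coord_sq_mul_norm_sq_le (hwY j) s
    _ = (d + 1) * Y ^ 2 := by simp; ring
    _ ≤ ((d + 1) * Y) ^ 2 := by
        rw [mul_pow]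
        gcongr
        exact le_self_pow₀ (by simp) two_ne_zero

end WeightedNorms

/-! ### Curves of functions as curves in `ℓ²` -/

section Curves

variable {d : ℕ} {S : Set ℝ}

open scoped Classical in
/-- The element of `ℓ²(ℤ^d)` with underlying function `f`, and `0` if `f` is not square summable. -/
def toL2 (f : (Fin d → ℤ) → ℂ) : L2 d := if h : Memℓp f 2 then ⟨f, h⟩ else 0

lemma toL2_coe (h : L2 d) : toL2 (h : (Fin d → ℤ) → ℂ) = h := dif_pos (lp.memℓp h)

lemma coe_toL2 {f : (Fin d → ℤ) → ℂ} (hf : w2 0 f < ⊤) : (toL2 f : (Fin d → ℤ) → ℂ) = f := by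
  rw [toL2, dif_pos (memℓp_two_of_lpn_lt_top (w2_zero_s9 f ▸ hf))]

lemma enorm_toL2_le (f : (Fin d → ℤ) → ℂ) : ‖toL2 f‖ₑ ≤ w2 0 f := by
  rw [w2_zero_s9, toL2]
  split
  · exact (lpn_two_coe _).ge
  · simp

lemma enorm_toL2 {f : (Fin d → ℤ) → ℂ} (hf : w2 0 f < ⊤) : ‖toL2 f‖ₑ = w2 0 f := by
  rw [← lpn_two_coe, coe_toL2 hf, w2_zero_s9]

lemma enorm_weightMul_toL2_le {w : lp (fun _ : Fin d → ℤ => ℝ) ∞} {k : ℕ}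
    (hw : ∀ x, |w x| ≤ jap x ^ k) (f : (Fin d → ℤ) → ℂ) : ‖weightMul w (toL2 f)‖ₑ ≤ w2 k f := by
  rw [toL2]
  split
  · rw [← lpn_two_coe]
    refine lpn_two_mono fun x => ?_
    rw [weightMul_apply, norm_smul, norm_jap_pow_mul]
    gcongr
    exact hw x
  · simp

lemma tendsto_of_tendsto_lpn_sub {α : Type*} {l : Filter α} {h : α → L2 d} {h₀ : L2 d}
    (hl : Tendsto (fun s => lpn 2 (h s - h₀ : L2 d)) l (𝓝 0)) : Tendsto h l (𝓝 h₀) := by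
  rw [tendsto_iff_edist_tendsto_0]
  simpa only [lpn_two_coe, edist_eq_enorm_sub] using hl

lemma ContW.continuousOn_toL2 {u : ℝ → (Fin d → ℤ) → ℂ} (hc : ContW 0 S u)
    (hu : ∀ t ∈ S, w2 0 (u t) < ⊤) : ContinuousOn (fun t => toL2 (u t)) S := by
  refine fun t ht => tendsto_of_tendsto_lpn_sub ((hc t ht).congr' ?_)
  filter_upwards [self_mem_nhdsWithin] with s hs
  rw [w2_zero_s9, lp.coeFn_sub, coe_toL2 (hu s hs), coe_toL2 (hu t ht)]
  rfl

lemma DerivW.hasDerivWithinAt_toL2 {u u' : ℝ → (Fin d → ℤ) → ℂ} (hd : DerivW 0 S u u')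
    (hu : ∀ t ∈ S, w2 0 (u t) < ⊤) (hu' : ∀ t ∈ S, w2 0 (u' t) < ⊤) {t : ℝ} (ht : t ∈ S) :
    HasDerivWithinAt (fun t => toL2 (u t)) (toL2 (u' t)) S t := by
  rw [hasDerivWithinAt_iff_tendsto_slope]
  refine tendsto_of_tendsto_lpn_sub ((hd t ht).congr' ?_)
  filter_upwards [self_mem_nhdsWithin] with s hs
  rw [w2_zero_s9, slope, vsub_eq_sub, lp.coeFn_sub, lp.coeFn_smul, lp.coeFn_sub,
    coe_toL2 (hu s hs.1), coe_toL2 (hu t ht), coe_toL2 (hu' t ht)]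
  rfl

lemma coe_discreteLaplacian (h : L2 d) :
    (discreteLaplacian unitVec h : (Fin d → ℤ) → ℂ) = lap h := by
  ext x
  rw [discreteLaplacian_apply, lap]
  norm_num

lemma toL2_eq_sub_discreteLaplacian {f f₂ F : (Fin d → ℤ) → ℂ} (hf : w2 0 f < ⊤)
    (hf₂ : w2 0 f₂ < ⊤) (hF : ∀ x, f₂ x - lap f x = F x) :
    toL2 F = toL2 f₂ - discreteLaplacian unitVec (toL2 f) := by
  rw [← toL2_coe (toL2 f₂ - discreteLaplacian unitVec (toL2 f)), lp.coeFn_sub,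
    coe_discreteLaplacian, coe_toL2 hf, coe_toL2 hf₂]
  exact congrArg toL2 (funext fun x => (hF x).symm)

lemma IsC2.isWaveSolution {T : ℝ} {u u1 u2 F : ℝ → (Fin d → ℤ) → ℂ}
    (hu : IsC2 0 (Icc 0 T) u u1 u2)
    (hF : ∀ t ∈ Icc (0 : ℝ) T, ∀ x, u2 t x - lap (u t) x = F t x) :
    IsWaveSolution (discreteGradient unitVec) T (fun t => toL2 (u t)) (fun t => toL2 (u1 t))
      (fun t => toL2 (F t)) where
  hasDerivWithinAt _ ht := hu.hder1.hasDerivWithinAt_toL2 hu.mem0 hu.mem1 ht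
  hasDerivWithinAt_deriv t ht := by
    rw [toL2_eq_sub_discreteLaplacian (hu.mem0 t ht) (hu.mem2 t ht) (hF t ht),
      adjoint_discreteGradient_discreteGradient, sub_neg_eq_add, sub_add_cancel]
    exact hu.hder2.hasDerivWithinAt_toL2 hu.mem1 hu.mem2 ht
  continuousOn_source :=
    ((hu.cont2.continuousOn_toL2 hu.mem2).sub
      ((discreteLaplacian unitVec).continuous.comp_continuousOn
        (hu.cont0.continuousOn_toL2 hu.mem0))).congr fun t ht =>
      toL2_eq_sub_discreteLaplacian (hu.mem0 t ht) (hu.mem2 t ht) (hF t ht)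

end Curves

/-! ### The weighted estimates on `ℤ^d` -/

section WeightedEstimates

variable {d k : ℕ} {T t Y : ℝ}

/-- The constant `1 + ‖∇‖` of the energy estimate on `ℓ²(ℤ^d)`. -/
def energyConst (d : ℕ) : ℝ := 1 + ‖discreteGradient (E := ℂ) (unitVec (d := d))‖

lemma one_le_energyConst (d : ℕ) : 1 ≤ energyConst d :=
  le_add_of_nonneg_right (ContinuousLinearMap.opNorm_nonneg _)

lemma eventually_norm_discreteLaplacian_sinWeight_mul_le (j : Fin d) {b : ℝ} (hb : 0 ≤ b) :
    ∀ᶠ ε in 𝓝[>] (0 : ℝ), ‖discreteLaplacian unitVec (sinWeight j ε)‖ * b ≤ 1 := by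
  have hlim : Tendsto (fun ε : ℝ => |ε| * b) (𝓝 0) (𝓝 0) :=
    Continuous.tendsto' (by fun_prop) 0 0 (by simp)
  filter_upwards [nhdsWithin_le_nhds (hlim.eventually_le_const zero_lt_one)] with ε hε
  exact (mul_le_mul_of_nonneg_right (norm_discreteLaplacian_sinWeight_le j ε) hb).trans hε

lemma IsWaveSolution.w2_one_le_and_w2_one_deriv_le {V V' G : ℝ → L2 d}
    (hV : IsWaveSolution (discreteGradient unitVec) T V V' G) (ht : t ∈ Icc 0 T)
    (hY : dataSize V V' G t ≤ Y)
    (hwY : ∀ j ε, dataSize (fun s => weightMul (sinWeight j ε) (V s))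
      (fun s => weightMul (sinWeight j ε) (V' s))
      (fun s => weightMul (sinWeight j ε) (G s)) t ≤ Y) :
    w2 1 (V t) ≤ ENNReal.ofReal ((d + 1) * (3 * energyConst d ^ 2 * Y * (1 + t) ^ 2)) ∧
      w2 1 (V' t) ≤ ENNReal.ofReal ((d + 1) * (3 * energyConst d ^ 2 * Y * (1 + t) ^ 2)) := by
  have ht1 : 1 ≤ 1 + t := by linarith [ht.1]
  have hY0 : 0 ≤ Y := (dataSize_nonneg V V' G ht.1).trans hY
  have hc := one_le_energyConst d
  have hunweighted : energyConst d * Y * (1 + t) ≤ 3 * energyConst d ^ 2 * Y * (1 + t) ^ 2 := by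
    gcongr
    · exact (le_self_pow₀ hc two_ne_zero).trans
        (le_mul_of_one_le_left (by positivity) (by norm_num))
    · exact le_self_pow₀ ht1 two_ne_zero
  have hbounds := hV.norm_le_and_norm_deriv_le ht hY
  have hε (j : Fin d) := eventually_norm_discreteLaplacian_sinWeight_mul_le j
    (zero_le_one.trans ht1)
  refine ⟨w2_one_le (hbounds.1.trans hunweighted) fun j => ?_,
    w2_one_le (hbounds.2.trans hunweighted) fun j => ?_⟩
  · filter_upwards [hε j] with ε hε using hV.norm_weightMul_le ht
      (sum_norm_difference_sinWeight_le j ε) hε hY (hwY j ε)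
  · filter_upwards [hε j] with ε hε
    refine (hV.norm_weightMul_deriv_le ht
      (sum_norm_difference_sinWeight_le j ε) hε hY (hwY j ε)).trans ?_
    exact mul_le_mul_of_nonneg_left (le_self_pow₀ ht1 two_ne_zero) (by positivity)

namespace IsC2

variable {u u1 u2 F : ℝ → (Fin d → ℤ) → ℂ}

lemma w2_zero_le_and_w2_zero_deriv_le (hu : IsC2 0 (Icc 0 T) u u1 u2)
    (hF : ∀ t ∈ Icc (0 : ℝ) T, ∀ x, u2 t x - lap (u t) x = F t x) (ht : t ∈ Icc 0 T) (hY0 : 0 ≤ Y)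
    (hY : w2 0 (u 0) + w2 0 (u1 0) + ∫⁻ s in Icc 0 t, w2 0 (F s) ≤ ENNReal.ofReal Y) :
    w2 0 (u t) ≤ ENNReal.ofReal (energyConst d * Y * (1 + t)) ∧
      w2 0 (u1 t) ≤ ENNReal.ofReal (energyConst d * Y * (1 + t)) := by
  have hbounds := (hu.isWaveSolution hF).norm_le_and_norm_deriv_le ht
    (dataSize_comp_le enorm_toL2_le ht.1 hY0 hY)
  rw [← enorm_toL2 (hu.mem0 t ht), ← enorm_toL2 (hu.mem1 t ht), ← ofReal_norm, ← ofReal_norm]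
  exact hbounds.imp ENNReal.ofReal_le_ofReal ENNReal.ofReal_le_ofReal

lemma w2_one_le_and_w2_one_deriv_le (hu : IsC2 0 (Icc 0 T) u u1 u2)
    (hF : ∀ t ∈ Icc (0 : ℝ) T, ∀ x, u2 t x - lap (u t) x = F t x) (ht : t ∈ Icc 0 T) (hY0 : 0 ≤ Y)
    (hY : w2 1 (u 0) + w2 1 (u1 0) + ∫⁻ s in Icc 0 t, w2 1 (F s) ≤ ENNReal.ofReal Y) :
    w2 1 (u t) ≤ ENNReal.ofReal ((d + 1) * (3 * energyConst d ^ 2 * Y * (1 + t) ^ 2)) ∧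
      w2 1 (u1 t) ≤ ENNReal.ofReal ((d + 1) * (3 * energyConst d ^ 2 * Y * (1 + t) ^ 2)) := by
  have hunweighted (f : (Fin d → ℤ) → ℂ) : ‖toL2 f‖ₑ ≤ w2 1 f :=
    (enorm_toL2_le f).trans (w2_zero_le 1 f)
  have hweighted (j : Fin d) (ε : ℝ) (f : (Fin d → ℤ) → ℂ) :
      ‖weightMul (sinWeight j ε) (toL2 f)‖ₑ ≤ w2 1 f :=
    enorm_weightMul_toL2_le (fun x => by
      rw [pow_one]; exact (abs_sinWeight_le j ε x).trans (abs_le_jap x j)) f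
  have hbounds := (hu.isWaveSolution hF).w2_one_le_and_w2_one_deriv_le ht
    (dataSize_comp_le hunweighted ht.1 hY0 hY)
    fun j ε => dataSize_comp_le (hweighted j ε) ht.1 hY0 hY
  rwa [coe_toL2 (hu.mem0 t ht), coe_toL2 (hu.mem1 t ht)] at hbounds

theorem w2_add_w2_deriv_le (hk : k = 0 ∨ k = 1) (hu : IsC2 0 (Icc 0 T) u u1 u2)
    (hF : ∀ t ∈ Icc (0 : ℝ) T, ∀ x, u2 t x - lap (u t) x = F t x) (ht : t ∈ Icc 0 T)
    (hfin : w2 k (u 0) + w2 k (u1 0) + ∫⁻ s in Icc 0 t, w2 k (F s) ≠ ⊤) :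
    w2 k (u t) + w2 k (u1 t) ≤
      ENNReal.ofReal (6 * (d + 1) * energyConst d ^ 2 * (1 + t) ^ (k + 1)) *
        (w2 k (u 0) + w2 k (u1 0) + ∫⁻ s in Icc 0 t, w2 k (F s)) := by
  have hc := one_le_energyConst d
  have ht0 : 0 ≤ t := ht.1
  obtain ⟨Y, hY0, hY⟩ : ∃ Y : ℝ, 0 ≤ Y ∧
      w2 k (u 0) + w2 k (u1 0) + ∫⁻ s in Icc 0 t, w2 k (F s) = ENNReal.ofReal Y :=
    ⟨_, ENNReal.toReal_nonneg, (ENNReal.ofReal_toReal hfin).symm⟩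
  suffices h : w2 k (u t) ≤
      ENNReal.ofReal ((d + 1) * (3 * energyConst d ^ 2 * Y * (1 + t) ^ (k + 1))) ∧
      w2 k (u1 t) ≤
      ENNReal.ofReal ((d + 1) * (3 * energyConst d ^ 2 * Y * (1 + t) ^ (k + 1))) by
    refine (add_le_add h.1 h.2).trans_eq ?_
    rw [hY, ← ENNReal.ofReal_add (by positivity) (by positivity),
      ← ENNReal.ofReal_mul (by positivity)]
    ring_nf
  rcases hk with rfl | rfl
  · have hconst : energyConst d * Y * (1 + t) ≤
        (d + 1) * (3 * energyConst d ^ 2 * Y * (1 + t) ^ (0 + 1)) :=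
      calc energyConst d * Y * (1 + t) = 1 * (1 * energyConst d ^ 1 * Y * (1 + t) ^ (0 + 1)) := by
            ring
        _ ≤ _ := by gcongr <;> norm_num
    exact (hu.w2_zero_le_and_w2_zero_deriv_le hF ht hY0 hY.le).imp
      (·.trans (ENNReal.ofReal_le_ofReal hconst)) (·.trans (ENNReal.ofReal_le_ofReal hconst))
  · exact hu.w2_one_le_and_w2_one_deriv_le hF ht hY0 hY.le

end IsC2

end WeightedEstimates

/-- explicitly time-dependent energy estimate for the inhomogeneous
linear discrete wave equation `∂ₜ²u - Δu = F`, in `ℓ^{2,k}`, `k ∈ {0,1}`. -/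
theorem stmt9 (d : ℕ) (hd : 0 < d) (k : ℕ) (hk : k = 0 ∨ k = 1) :
    ∃ C : ℝ≥0, 0 < C ∧
      ∀ T : ℝ, 0 < T →
        ∀ (u u1 u2 F : ℝ → (Fin d → ℤ) → ℂ) (f g : (Fin d → ℤ) → ℂ),
          IsC2 0 (Set.Icc 0 T) u u1 u2 →
          (∀ t ∈ Set.Icc (0 : ℝ) T, ∀ x, u2 t x - lap (u t) x = F t x) →
          (∀ x, u 0 x = f x) → (∀ x, u1 0 x = g x) →
          w2 k f < ⊤ → w2 k g < ⊤ →
          (∫⁻ s in Set.Icc (0 : ℝ) T, w2 k (F s)) < ⊤ →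
          ∀ t ∈ Set.Icc (0 : ℝ) T,
            w2 k (u t) + w2 k (u1 t) ≤
              (C : ℝ≥0∞) * ENNReal.ofReal (1 + t ^ (k + 1)) *
                (w2 k f + w2 k g + ∫⁻ s in Set.Icc (0 : ℝ) t, w2 k (F s)) := by
  have hK : 0 < 6 * (d + 1) * energyConst d ^ 2 * 2 ^ k := by
    have := zero_lt_one.trans_le (one_le_energyConst d)
    positivity
  refine ⟨⟨_, hK.le⟩, hK, fun T _ u u1 u2 F f g hu hF hf hg hfk hgk hFk t ht => ?_⟩
  obtain rfl : u 0 = f := funext hf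
  obtain rfl : u1 0 = g := funext hg
  have hfin : w2 k (u 0) + w2 k (u1 0) + ∫⁻ s in Icc (0 : ℝ) t, w2 k (F s) ≠ ⊤ := by
    have := (lintegral_mono_set (Icc_subset_Icc_right ht.2)).trans_lt hFk
    finiteness
  set data := w2 k (u 0) + w2 k (u1 0) + ∫⁻ s in Icc (0 : ℝ) t, w2 k (F s)
  have hpow : (1 + t) ^ (k + 1) ≤ 2 ^ k * (1 + t ^ (k + 1)) := by
    simpa using add_pow_le zero_le_one ht.1 (k + 1)
  calc w2 k (u t) + w2 k (u1 t)
      ≤ ENNReal.ofReal (6 * (d + 1) * energyConst d ^ 2 * (1 + t) ^ (k + 1)) * data :=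
        hu.w2_add_w2_deriv_le hk hF ht hfin
    _ ≤ ENNReal.ofReal (6 * (d + 1) * energyConst d ^ 2 * 2 ^ k * (1 + t ^ (k + 1))) * data := by
        rw [mul_assoc _ (2 ^ k)]
        gcongr
    _ = _ := by
        rw [ENNReal.ofReal_mul hK.le]
        congr 2
        exact ENNReal.ofReal_eq_coe_nnreal hK.le
end
end
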